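/- arXiv:2604.22735 — 2 statements merged into one kernel-verified Lean document; each statement's English description precedes it below -/
import Mathlib

section
/- Let Ĝ be a finite connected simple graph in which every vertex has degree exactly 4. For a vertex v of Ĝ, let G_v denote the induced subgraph of Ĝ on the complement of v. Let v and w be vertices of Ĝ such that G_v and G_w are both connected, fix edges e_v ∈ E(G_v) and e_w ∈ E(G_w), and suppose that the functions u ↦ Ψ_{G_v}(x_u)⁻² and u ↦ Ψ_{G_w}(x_u)⁻² are Lebesgue integrable on the respective positive orthants (i.e. both Feynman residues are finite). Then the Feynman residue of G_v equals the Feynman residue of G_w. -/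
open MeasureTheory
open scoped Classical

/-- The Kirchhoff graph polynomial: the sum over spanning trees `T` of `G` of the
product of `x e` over all edges `e` of `G` not in `T`. -/
noncomputable def kirchhoff {V : Type*} [Fintype V] (G : SimpleGraph V)
    (x : G.edgeSet → ℝ) : ℝ :=
  ∑ T ∈ Finset.univ.filter (fun T : SimpleGraph V => T ≤ G ∧ T.IsTree),
    ∏ e : G.edgeSet, if (e : Sym2 V) ∈ T.edgeSet then 1 else x e

/-- The affine chart `x(e₀) = 1`: extend `u : E \ {e₀} → ℝ` to `E → ℝ` by
sending `e₀` to `1`. -/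
noncomputable def chart {V : Type*} [Fintype V] (G : SimpleGraph V) (e₀ : G.edgeSet)
    (u : {e : G.edgeSet // e ≠ e₀} → ℝ) : G.edgeSet → ℝ :=
  fun e => if h : e = e₀ then 1 else u ⟨e, h⟩

/-- The Feynman residue of `G` in the affine chart `x(e₀) = 1`. -/
noncomputable def feynmanResidue {V : Type*} [Fintype V] (G : SimpleGraph V)
    (e₀ : G.edgeSet) : ℝ :=
  ∫ u in {u : {e : G.edgeSet // e ≠ e₀} → ℝ | ∀ e, 0 < u e},
    (kirchhoff G (chart G e₀ u))⁻¹ ^ 2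

/-!
Write each propagator `1 / ‖x i - x j‖ ^ 2` on `ℝ ^ 4` as `∫ exp (-a ‖x i - x j‖ ^ 2)` over a
Schwinger parameter `a`. The Gaussian integral over the positions then produces the inverse square
of the determinant of the weighted graph Laplacian, which by the matrix-tree theorem is the
Kirchhoff polynomial up to the inversion `a ↦ 1 / a` of all parameters. Hence the residue of a graph
is, up to a power of `π`, its position-space integral, with one vertex pinned at the origin and the
overall scale fixed. In the graph obtained by deleting `v`, pin `w`: the inversion `x ↦ x / ‖x‖ ^ 2`
multiplies the integrand by conformal factors which, with the Jacobian `‖x‖ ^ (-8)`, turn the edges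
at `w` into the edges at `v` precisely because every vertex has degree four. So it exchanges the
roles of `v` and `w`, and a cutoff invariant under `s ↦ 1 / s` makes the scale fixing symmetric too.
-/

section MatrixTree

universe u

variable {V : Type u} {r : V}

/-- A parent function towards the root `r`: following parents from any vertex reaches `r`.
This is encoded as well-foundedness of the relation expressing that `x` is the parent of `y`. -/
def RootedParent (g : {i : V // i ≠ r} → V) : Prop :=
  WellFounded fun x y => ∃ hy : y ≠ r, g ⟨y, hy⟩ = x

theorem RootedParent.exists_rank {g : {i : V // i ≠ r} → V} (hg : RootedParent g) :
    ∃ d : V → Ordinal.{u}, ∀ i, d (g i) < d i :=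
  ⟨fun x => (hg.apply x).rank, fun i => (hg.apply i).rank_lt_of_rel ⟨i.2, rfl⟩⟩

theorem exists_invariant_set_of_not_rootedParent {g : {i : V // i ≠ r} → V}
    (hg : ¬ RootedParent g) :
    ∃ S : Set V, r ∉ S ∧ S.Nonempty ∧ ∀ i : {i : V // i ≠ r}, (i : V) ∈ S ↔ g i ∈ S := by
  set rel : V → V → Prop := fun x y => ∃ hy : y ≠ r, g ⟨y, hy⟩ = x
  have acc_iff (i : {i : V // i ≠ r}) : Acc rel i ↔ Acc rel (g i) :=
    ⟨fun h => h.inv ⟨i.2, rfl⟩, fun h => Acc.intro _ fun _ ⟨_, hx⟩ => hx ▸ h⟩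
  refine ⟨{x | ¬ Acc rel x}, not_not.2 (Acc.intro r fun _ ⟨h, _⟩ => absurd rfl h), ?_,
    fun i => not_congr (acc_iff i)⟩
  by_contra! hempty
  exact hg ⟨fun x => not_not.1 (Set.eq_empty_iff_forall_notMem.1 hempty x)⟩

/-- The adjacency matrix of a parent function, with the column of the root removed. -/
noncomputable def parentMatrix (R : Type*) [CommRing R] (g : {i : V // i ≠ r} → V) :
    Matrix {i : V // i ≠ r} {i : V // i ≠ r} R :=
  Matrix.of fun i j => if g i = j then 1 else 0

variable [Fintype V] {R : Type*} [CommRing R]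

theorem RootedParent.det_one_sub_parentMatrix {g : {i : V // i ≠ r} → V} (hg : RootedParent g) :
    (1 - parentMatrix R g).det = 1 := by
  obtain ⟨d, hd⟩ := hg.exists_rank
  have apply_ne (i j : {i : V // i ≠ r}) (hij : d i ≤ d j) : g i ≠ j := fun h =>
    (h ▸ hd i).not_ge hij
  have triangular : (1 - parentMatrix R g).BlockTriangular
      fun i => OrderDual.toDual (d (i : V)) := fun i j hij => by
    have hij : d i < d j := hij
    have hne : i ≠ j := fun h => hij.ne (by rw [h])
    simp [parentMatrix, hne, apply_ne _ _ hij.le]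
  rw [triangular.det]
  refine Finset.prod_eq_one fun a _ => ?_
  suffices h : (1 - parentMatrix R g).toSquareBlock
      (fun i => OrderDual.toDual (d (i : V))) a = 1 by rw [h, Matrix.det_one]
  ext i j
  have hij : d i = d j := i.2.trans j.2.symm
  simp [Matrix.toSquareBlock, Matrix.toSquareBlockProp, parentMatrix, apply_ne _ _ hij.le,
    Matrix.one_apply, Subtype.ext_iff]

theorem parentMatrix_mulVec_indicator {g : {i : V // i ≠ r} → V} {S : Set V} (hr : r ∉ S)
    (hS : ∀ i : {i : V // i ≠ r}, (i : V) ∈ S ↔ g i ∈ S) :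
    (parentMatrix R g).mulVec (S.indicator 1 ∘ Subtype.val) = S.indicator 1 ∘ Subtype.val := by
  ext i
  simp only [Matrix.mulVec, dotProduct, parentMatrix, Matrix.of_apply, ite_mul, one_mul, zero_mul,
    Function.comp_apply]
  by_cases hi : g i = r
  · have hiS : (i : V) ∉ S := by rw [hS, hi]; exact hr
    rw [Set.indicator_of_notMem hiS]
    exact Finset.sum_eq_zero fun j _ => if_neg fun h => j.2 (h.symm.trans hi)
  · rw [Finset.sum_eq_single ⟨g i, hi⟩ (fun j _ hj => if_neg fun h => hj (Subtype.ext h.symm))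
      (by simp)]
    simp [Set.indicator_apply, hS i]

theorem det_one_sub_parentMatrix_of_not_rootedParent {g : {i : V // i ≠ r} → V}
    (hg : ¬ RootedParent g) : (1 - parentMatrix R g).det = 0 := by
  obtain ⟨S, hr, ⟨x, hx⟩, hS⟩ := exists_invariant_set_of_not_rootedParent hg
  have hker : (1 - parentMatrix R g).mulVec (S.indicator 1 ∘ Subtype.val) = 0 := by
    rw [Matrix.sub_mulVec, Matrix.one_mulVec, parentMatrix_mulVec_indicator hr hS, sub_self]
  have hsmul : (1 - parentMatrix R g).det •
      (S.indicator 1 ∘ Subtype.val : {i : V // i ≠ r} → R) = 0 := by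
    rw [← Matrix.one_mulVec (_ ∘ _), ← Matrix.smul_mulVec, ← Matrix.adjugate_mul,
      ← Matrix.mulVec_mulVec, hker, Matrix.mulVec_zero]
  simpa [hx] using congrFun hsmul ⟨x, fun h => hr (h ▸ hx)⟩

/-- The Laplacian of a weighted digraph, with the row and the column of the root `r` removed.
The diagonal entry of `i` is the total weight of the arcs from `i`, arcs to `r` included. -/
noncomputable def reducedLaplacian (c : V → V → R) (r : V) :
    Matrix {i : V // i ≠ r} {i : V // i ≠ r} R :=
  Matrix.diagonal (fun i : {i : V // i ≠ r} => ∑ k, c i k) -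
    Matrix.of fun i j : {i : V // i ≠ r} => c i j

theorem reducedLaplacian_eq_sum (c : V → V → R) (r : V) :
    reducedLaplacian c r = fun i : {i : V // i ≠ r} =>
      ∑ k, c i k • (1 - parentMatrix R fun _ => k) i := by
  ext i j
  simp [reducedLaplacian, parentMatrix, mul_sub, Matrix.one_apply, Matrix.diagonal_apply]

/-- Tutte's matrix-tree theorem for weighted digraphs. -/
theorem det_reducedLaplacian (c : V → V → R) (r : V) :
    (reducedLaplacian c r).det =
      ∑ g with RootedParent (r := r) g, ∏ i : {i : V // i ≠ r}, c i (g i) := by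
  calc (reducedLaplacian c r).det
      = ∑ g : {i : V // i ≠ r} → V, Matrix.detRowAlternating
          fun i : {i : V // i ≠ r} => c i (g i) • (1 - parentMatrix R g) i := by
        rw [reducedLaplacian_eq_sum]
        exact Matrix.detRowAlternating.toMultilinearMap.map_sum _
    _ = ∑ g : {i : V // i ≠ r} → V,
          (∏ i : {i : V // i ≠ r}, c i (g i)) * (1 - parentMatrix R g).det :=
        Finset.sum_congr rfl fun g _ =>
          Matrix.detRowAlternating.toMultilinearMap.map_smul_univ _ _
    _ = _ := by
        rw [Finset.sum_filter]
        refine Finset.sum_congr rfl fun g _ => ?_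
        split_ifs with hg
        · rw [hg.det_one_sub_parentMatrix, mul_one]
        · rw [det_one_sub_parentMatrix_of_not_rootedParent hg, mul_zero]

end MatrixTree

section SpanningTrees

variable {V : Type*} {r : V}

/-- The graph joining every vertex other than the root to its parent. -/
def parentGraph (g : {i : V // i ≠ r} → V) : SimpleGraph V :=
  SimpleGraph.fromEdgeSet (Set.range fun i : {i : V // i ≠ r} => s((i : V), g i))

namespace RootedParent

variable {g : {i : V // i ≠ r} → V}

theorem apply_ne (hg : RootedParent g) (i : {i : V // i ≠ r}) : g i ≠ i := fun h =>
  hg.irrefl.irrefl _ ⟨i.2, h⟩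

theorem apply_apply_ne (hg : RootedParent g) (i : {i : V // i ≠ r}) (hi : g i ≠ r) :
    g ⟨g i, hi⟩ ≠ i := fun h =>
  hg.asymm.asymm _ _ ⟨i.2, rfl⟩ ⟨hi, h⟩

theorem edgeSet_parentGraph (hg : RootedParent g) :
    (parentGraph g).edgeSet = Set.range fun i : {i : V // i ≠ r} => s((i : V), g i) := by
  rw [parentGraph, SimpleGraph.edgeSet_fromEdgeSet, sdiff_eq_left, Set.disjoint_left]
  rintro _ ⟨i, rfl⟩ h
  exact hg.apply_ne i (by simpa [eq_comm] using h)

theorem edge_injective (hg : RootedParent g) :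
    Function.Injective fun i : {i : V // i ≠ r} => s((i : V), g i) := by
  intro i j h
  rcases Sym2.eq_iff.1 h with ⟨hij, _⟩ | ⟨hij, hji⟩
  · exact Subtype.ext hij
  · obtain ⟨_, hjr⟩ := j
    subst hji
    exact absurd hij.symm (hg.apply_apply_ne i hjr)

theorem adj_parentGraph (hg : RootedParent g) (i : {i : V // i ≠ r}) :
    (parentGraph g).Adj i (g i) := by
  rw [← SimpleGraph.mem_edgeSet, hg.edgeSet_parentGraph]
  exact ⟨i, rfl⟩

theorem connected_parentGraph (hg : RootedParent g) : (parentGraph g).Connected := by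
  refine (SimpleGraph.connected_iff_exists_forall_reachable _).2
    ⟨r, fun x => SimpleGraph.Reachable.symm ?_⟩
  induction x using hg.induction with
  | _ x ih =>
    by_cases hx : x = r
    · rw [hx]
    · exact (hg.adj_parentGraph ⟨x, hx⟩).reachable.trans (ih _ ⟨hx, rfl⟩)

theorem isTree_parentGraph [Finite V] (hg : RootedParent g) : (parentGraph g).IsTree := by
  have : Fintype V := Fintype.ofFinite V
  refine SimpleGraph.isTree_iff_connected_and_card.2 ⟨hg.connected_parentGraph, ?_⟩
  rw [hg.edgeSet_parentGraph, Nat.card_range_of_injective hg.edge_injective,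
    Nat.card_eq_fintype_card, Nat.card_eq_fintype_card, Fintype.card_subtype_compl,
    Fintype.card_subtype_eq, Nat.sub_add_cancel (Fintype.card_pos_iff.2 ⟨r⟩)]

theorem eq_of_parentGraph_eq {h : {i : V // i ≠ r} → V} (hg : RootedParent g)
    (hh : RootedParent h) (hgh : parentGraph g = parentGraph h) : g = h := by
  suffices key : ∀ x, ∀ hx : x ≠ r, g ⟨x, hx⟩ = h ⟨x, hx⟩ from funext fun i => key i i.2
  intro x
  induction x using hg.induction with
  | _ x ih =>
    intro hx
    obtain ⟨j, hj⟩ : s(x, g ⟨x, hx⟩) ∈ Set.range fun j : {i : V // i ≠ r} => s((j : V), h j) := by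
      rw [← hh.edgeSet_parentGraph, ← hgh]
      exact hg.adj_parentGraph ⟨x, hx⟩
    rcases Sym2.eq_iff.1 hj with ⟨rfl, hjx⟩ | ⟨hjx, hhj⟩
    · exact hjx.symm
    · obtain ⟨_, hjr⟩ := j
      subst hjx
      exact absurd ((ih _ ⟨hx, rfl⟩ hjr).trans hhj) (hg.apply_apply_ne ⟨x, hx⟩ hjr)

end RootedParent

theorem exists_rootedParent_parentGraph_eq {T : SimpleGraph V} (hT : T.IsTree) (r : V) :
    ∃ g : {i : V // i ≠ r} → V, RootedParent g ∧ parentGraph g = T := by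
  have exists_closer (i : {i : V // i ≠ r}) : ∃ j, T.Adj i j ∧ T.dist j r < T.dist i r := by
    obtain ⟨i, hi⟩ := i
    obtain ⟨p, hp⟩ := hT.connected.exists_walk_length_eq_dist i r
    cases p with
    | nil => exact absurd rfl hi
    | cons hadj q => exact ⟨_, hadj, (SimpleGraph.dist_le q).trans_lt (hp ▸ Nat.lt_succ_self _)⟩
  choose g hadj hdist using exists_closer
  have hg : RootedParent g := Subrelation.wf
    (fun ⟨hy, hx⟩ => hx ▸ hdist ⟨_, hy⟩) (measure fun x => T.dist x r).wf
  refine ⟨g, hg, ?_⟩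
  have hle : parentGraph g ≤ T := by
    rw [← SimpleGraph.edgeSet_subset_edgeSet, hg.edgeSet_parentGraph]
    rintro _ ⟨i, rfl⟩
    exact hadj i
  exact hle.antisymm
    ((SimpleGraph.isTree_iff_minimal_connected.1 hT).2 hg.connected_parentGraph hle)

variable [Fintype V]

theorem RootedParent.prod_edgeFinset_parentGraph {M : Type*} [CommMonoid M]
    {g : {i : V // i ≠ r} → V} (hg : RootedParent g) (f : Sym2 V → M) :
    ∏ e ∈ (parentGraph g).edgeFinset, f e = ∏ i : {i : V // i ≠ r}, f s((i : V), g i) := by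
  have himage : (parentGraph g).edgeFinset =
      Finset.univ.image fun i : {i : V // i ≠ r} => s((i : V), g i) := by
    ext e
    simp [hg.edgeSet_parentGraph]
  rw [himage, Finset.prod_image hg.edge_injective.injOn]

theorem sum_rootedParent_prod {R : Type*} [CommSemiring R] (f : Sym2 V → R) (r : V) :
    ∑ g with RootedParent (r := r) g, ∏ i : {i : V // i ≠ r}, f s((i : V), g i) =
      ∑ T : SimpleGraph V with T.IsTree, ∏ e ∈ T.edgeFinset, f e := by
  refine Finset.sum_bij (fun g _ => parentGraph g) ?_ ?_ ?_ ?_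
  · exact fun g hg => by simpa using (Finset.mem_filter.1 hg).2.isTree_parentGraph
  · exact fun g hg h hh =>
      (Finset.mem_filter.1 hg).2.eq_of_parentGraph_eq (Finset.mem_filter.1 hh).2
  · intro T hT
    obtain ⟨g, hg, hgT⟩ := exists_rootedParent_parentGraph_eq (Finset.mem_filter.1 hT).2 r
    exact ⟨g, by simpa using hg, hgT⟩
  · exact fun g hg => ((Finset.mem_filter.1 hg).2.prod_edgeFinset_parentGraph f).symm

theorem prod_edgeFinset_extend {R : Type*} [CommMonoidWithZero R] (G T : SimpleGraph V)
    (a : G.edgeSet → R) :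
    ∏ e ∈ T.edgeFinset, Function.extend Subtype.val a 0 e =
      if T ≤ G then ∏ e : G.edgeSet, if (e : Sym2 V) ∈ T.edgeSet then a e else 1 else 0 := by
  split_ifs with hTG
  · have himage : T.edgeFinset =
        (Finset.univ.filter fun e : G.edgeSet => (e : Sym2 V) ∈ T.edgeSet).image Subtype.val := by
      ext e
      simpa using fun he => SimpleGraph.edgeSet_subset_edgeSet.2 hTG he
    rw [himage, Finset.prod_image Subtype.val_injective.injOn, Finset.prod_filter]
    simp only [Subtype.val_injective.extend_apply]
  · obtain ⟨e, heT, heG⟩ := Set.not_subset.1 (mt SimpleGraph.edgeSet_subset_edgeSet.1 hTG)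
    exact Finset.prod_eq_zero (SimpleGraph.mem_edgeFinset.2 heT)
      (Function.extend_apply' _ _ _ fun ⟨e', he'⟩ => heG (he' ▸ e'.2))

variable {R : Type*} [CommRing R]

/-- The Laplacian of `G` with edge weights `a`, with the row and the column of `r` removed.
The weights are extended by zero to all unordered pairs of vertices. -/
noncomputable def graphLaplacian (G : SimpleGraph V) (r : V) (a : G.edgeSet → R) :
    Matrix {i : V // i ≠ r} {i : V // i ≠ r} R :=
  reducedLaplacian (fun i j => Function.extend Subtype.val a 0 s(i, j)) r

/-- Kirchhoff's weighted matrix-tree theorem. -/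
theorem det_graphLaplacian (G : SimpleGraph V) (r : V) (a : G.edgeSet → R) :
    (graphLaplacian G r a).det = ∑ T : SimpleGraph V with T ≤ G ∧ T.IsTree,
      ∏ e : G.edgeSet, if (e : Sym2 V) ∈ T.edgeSet then a e else 1 := by
  rw [graphLaplacian, det_reducedLaplacian, sum_rootedParent_prod (Function.extend Subtype.val a 0)]
  simp only [prod_edgeFinset_extend, ← Finset.sum_filter, Finset.filter_filter, and_comm]

theorem kirchhoff_eq_prod_mul_det (G : SimpleGraph V) (r : V) {x : G.edgeSet → ℝ}
    (hx : ∀ e, x e ≠ 0) :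
    kirchhoff G x = (∏ e, x e) * (graphLaplacian G r x⁻¹).det := by
  rw [det_graphLaplacian, kirchhoff, Finset.mul_sum]
  refine Finset.sum_congr rfl fun T _ => ?_
  rw [← Finset.prod_mul_distrib]
  refine Finset.prod_congr rfl fun e _ => ?_
  split_ifs <;> simp [hx e]

end SpanningTrees

section InsertCoord

variable {ι X : Type*}

/-- The family with value `t` at the index `i₀` and values `c` at the other indices. It serves both
to write affine charts, with `t = 1`, and to pin the root of a graph, with `t = 0`. -/
noncomputable def insertCoord (i₀ : ι) (t : X) (c : {i : ι // i ≠ i₀} → X) : ι → X :=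
  fun i => if h : i = i₀ then t else c ⟨i, h⟩

@[simp]
theorem insertCoord_self (i₀ : ι) (t : X) (c : {i : ι // i ≠ i₀} → X) :
    insertCoord i₀ t c i₀ = t :=
  dif_pos rfl

@[simp]
theorem insertCoord_coe (i₀ : ι) (t : X) (c : {i : ι // i ≠ i₀} → X) (i : {i : ι // i ≠ i₀}) :
    insertCoord i₀ t c i = c i :=
  dif_neg i.2

end InsertCoord

section DirichletForm

variable {V : Type*} [Fintype V]

theorem sum_dart_edge {M : Type*} [AddCommMonoid M] (G : SimpleGraph V) (f : Sym2 V → M) :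
    ∑ d : G.Dart, f d.edge = 2 • ∑ e : G.edgeSet, f e := by
  rw [← Finset.sum_fiberwise_of_maps_to' (t := G.edgeFinset)
    (fun d _ => SimpleGraph.mem_edgeFinset.2 d.edge_mem) f, ← Finset.sum_nsmul,
    ← Finset.sum_subtype G.edgeFinset (fun _ => SimpleGraph.mem_edgeFinset) fun e => 2 • f e]
  refine Finset.sum_congr rfl fun e he => ?_
  rw [Finset.sum_const]
  congr 1
  convert G.dart_edge_fiber_card e (SimpleGraph.mem_edgeFinset.1 he)

theorem sum_sum_adj {M : Type*} [AddCommMonoid M] (G : SimpleGraph V) (f : Sym2 V → M) :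
    (∑ i, ∑ j, if G.Adj i j then f s(i, j) else 0) = 2 • ∑ e : G.edgeSet, f e := by
  rw [← sum_dart_edge, ← Fintype.sum_prod_type', ← Finset.sum_filter]
  refine (Finset.sum_bij (fun d _ => d.toProd) (fun d _ => by simp)
    (fun d _ d' _ h => SimpleGraph.Dart.ext _ _ h) (fun p hp => ?_) (fun d _ => rfl)).symm
  exact ⟨⟨p, (Finset.mem_filter.1 hp).2⟩, Finset.mem_univ _, rfl⟩

section Norm

variable {U E : Type*} [NormedAddCommGroup E]

/-- The squared length of an edge, for vertices placed in a normed space. -/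
def edgeNormSq (y : U → E) : Sym2 U → ℝ :=
  Sym2.lift ⟨fun i j => ‖y i - y j‖ ^ 2, fun i j => by simp only [norm_sub_rev]⟩

@[simp]
theorem edgeNormSq_mk (y : U → E) (i j : U) : edgeNormSq y s(i, j) = ‖y i - y j‖ ^ 2 :=
  rfl

theorem edgeNormSq_nonneg (y : U → E) (e : Sym2 U) : 0 ≤ edgeNormSq y e := by
  induction e with
  | _ i j => exact sq_nonneg _

/-- The Dirichlet form of `G` with edge weights `a`: the weighted sum of the squared lengths of the
edges of `G`. -/
noncomputable def dirichletForm (G : SimpleGraph V) (a : G.edgeSet → ℝ) (y : V → E) : ℝ :=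
  ∑ e, a e * edgeNormSq y e

theorem dirichletForm_nonneg (G : SimpleGraph V) {a : G.edgeSet → ℝ} (ha : ∀ e, 0 ≤ a e)
    (y : V → E) : 0 ≤ dirichletForm G a y :=
  Finset.sum_nonneg fun e _ => mul_nonneg (ha e) (edgeNormSq_nonneg y e)

theorem eq_of_dirichletForm_eq_zero {G : SimpleGraph V}
    (hG : G.Preconnected) {a : G.edgeSet → ℝ} (ha : ∀ e, 0 < a e) {y : V → E}
    (hy : dirichletForm G a y = 0) (i j : V) : y i = y j := by
  have eq_of_adj (i j : V) (hij : G.Adj i j) : y i = y j := by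
    have h := (Finset.sum_eq_zero_iff_of_nonneg
      fun e _ => mul_nonneg (ha e).le (edgeNormSq_nonneg y e)).1 hy ⟨s(i, j), hij⟩
      (Finset.mem_univ _)
    simpa [(ha _).ne', sub_eq_zero] using h
  obtain ⟨p⟩ := hG i j
  induction p with
  | nil => rfl
  | cons hadj _ ih => exact (eq_of_adj _ _ hadj).trans ih

end Norm

variable {E : Type*} [NormedAddCommGroup E] [InnerProductSpace ℝ E] (G : SimpleGraph V)

theorem dirichletForm_eq_sum (a : G.edgeSet → ℝ) (y : V → E) :
    dirichletForm G a y = ∑ i, ∑ j,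
      Function.extend Subtype.val a 0 s(i, j) * (‖y i‖ ^ 2 - inner ℝ (y i) (y j)) := by
  set w : Sym2 V → ℝ := Function.extend Subtype.val a 0 with hw
  have hdouble := sum_sum_adj G fun e => w e * edgeNormSq y e
  have hedges : ∑ e : G.edgeSet, w e * edgeNormSq y e = dirichletForm G a y := by
    simp only [dirichletForm, hw, Subtype.val_injective.extend_apply]
  have hsymm (i j : V) : (if G.Adj i j then w s(i, j) * edgeNormSq y s(i, j) else 0) =
      w s(i, j) * (‖y i‖ ^ 2 - inner ℝ (y i) (y j)) +
      w s(j, i) * (‖y j‖ ^ 2 - inner ℝ (y j) (y i)) := by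
    rw [Sym2.eq_swap (a := j), real_inner_comm (y i) (y j)]
    split_ifs with h
    · rw [edgeNormSq_mk, norm_sub_sq_real]
      ring
    · have hzero : w s(i, j) = 0 := Function.extend_apply' _ _ _ fun ⟨e, he⟩ =>
        h (G.mem_edgeSet.1 (he ▸ e.2))
      rw [hzero, zero_mul, zero_mul, add_zero]
  simp only [hedges, hsymm, Finset.sum_add_distrib, two_nsmul] at hdouble
  rw [Finset.sum_comm (f := fun i j => w s(j, i) * _)] at hdouble
  linarith

theorem dirichletForm_eq_sum_graphLaplacian (a : G.edgeSet → ℝ) {r : V} {y : V → E}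
    (hy : y r = 0) :
    dirichletForm G a y = ∑ i, ∑ j, graphLaplacian G r a i j * inner ℝ (y i) (y j) := by
  have sum_ne (f : V → ℝ) (hf : f r = 0) : ∑ i, f i = ∑ i : {i : V // i ≠ r}, f i := by
    rw [Fintype.sum_eq_add_sum_subtype_ne f r, hf, zero_add]
  rw [dirichletForm_eq_sum, sum_ne _ (by simp [hy])]
  refine Finset.sum_congr rfl fun i _ => ?_
  simp only [mul_sub, Finset.sum_sub_distrib]
  rw [sum_ne (fun j => _ * inner ℝ (y i) (y j)) (by simp [hy])]
  simp [graphLaplacian, reducedLaplacian, sub_mul, Matrix.diagonal_apply, Finset.sum_mul]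

theorem isSymm_graphLaplacian {R : Type*} [CommRing R] (a : G.edgeSet → R) (r : V) :
    (graphLaplacian G r a).IsSymm := by
  refine (Matrix.isSymm_diagonal _).sub ?_
  ext i j
  simp only [Matrix.transpose_apply, Matrix.of_apply, Sym2.eq_swap]

variable {G}

theorem posDef_graphLaplacian (hG : G.Preconnected) {a : G.edgeSet → ℝ} (ha : ∀ e, 0 < a e)
    (r : V) : (graphLaplacian G r a).PosDef := by
  refine Matrix.PosDef.of_dotProduct_mulVec_pos ?_ fun x hx => ?_
  · rw [Matrix.IsHermitian, Matrix.conjTranspose_eq_transpose_of_trivial]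
    exact isSymm_graphLaplacian G a r
  · have hform : star x ⬝ᵥ (graphLaplacian G r a).mulVec x =
        dirichletForm G a (insertCoord r 0 x) := by
      rw [dirichletForm_eq_sum_graphLaplacian G a (insertCoord_self r 0 x)]
      simp [dotProduct, Matrix.mulVec, Finset.mul_sum, mul_comm, mul_left_comm]
    rw [hform]
    refine (dirichletForm_nonneg G (fun e => (ha e).le) _).lt_of_ne' fun hzero => hx ?_
    ext i
    simpa using eq_of_dirichletForm_eq_zero hG ha hzero i r

end DirichletForm

section ProductMeasures

open scoped ENNReal

theorem measurable_insertCoord {ι X : Type*} [MeasurableSpace X] (i₀ : ι) :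
    Measurable fun p : X × ({i : ι // i ≠ i₀} → X) => insertCoord i₀ p.1 p.2 := by
  refine measurable_pi_lambda _ fun i => ?_
  by_cases hi : i = i₀
  · simpa only [insertCoord, hi, dite_true] using measurable_fst
  · simp only [insertCoord, hi, dite_false]
    fun_prop

variable {ι : Type*} [Fintype ι] {X : ι → Type*} [∀ i, MeasurableSpace (X i)]

theorem lmarginal_prod (μ : ∀ i, Measure (X i)) [∀ i, SigmaFinite (μ i)] {f : ∀ i, X i → ℝ≥0∞}
    (hf : ∀ i, Measurable (f i)) (s : Finset ι) (x : ∀ i, X i) :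
    (∫⋯∫⁻_s, (fun x => ∏ i, f i (x i)) ∂μ) x =
      (∏ i ∈ s, ∫⁻ t, f i t ∂μ i) * ∏ i ∈ sᶜ, f i (x i) := by
  induction s using Finset.induction_on generalizing x with
  | empty => simp
  | insert i s hi ih =>
    have hcompl : sᶜ = insert i (insert i s)ᶜ := by
      rw [Finset.compl_insert, Finset.insert_erase (Finset.mem_compl.2 hi)]
    have hupdate (t : X i) : ∏ j ∈ sᶜ, f j (Function.update x i t j) =
        f i t * ∏ j ∈ (insert i s)ᶜ, f j (x j) := by
      rw [hcompl, Finset.prod_insert (by simp), Function.update_self]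
      congr 1
      refine Finset.prod_congr rfl fun j hj => ?_
      rw [Function.update_of_ne fun h => by simp [h] at hj]
    rw [lmarginal_insert _ (by fun_prop) hi]
    simp only [ih, hupdate]
    rw [lintegral_const_mul _ (by fun_prop), lintegral_mul_const _ (hf i), Finset.prod_insert hi,
      mul_left_comm, mul_assoc]

theorem lintegral_pi_prod (μ : ∀ i, Measure (X i)) [∀ i, SigmaFinite (μ i)]
    {f : ∀ i, X i → ℝ≥0∞} (hf : ∀ i, Measurable (f i)) :
    ∫⁻ x, ∏ i, f i (x i) ∂Measure.pi μ = ∏ i, ∫⁻ t, f i t ∂μ i := by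
  by_cases hne : Nonempty (∀ i, X i)
  · obtain ⟨x⟩ := hne
    simp [lintegral_eq_lmarginal_univ x, lmarginal_prod μ hf]
  · obtain ⟨i, hi⟩ : ∃ i, IsEmpty (X i) := by simpa using hne
    have := not_nonempty_iff.1 hne
    rw [Measure.eq_zero_of_isEmpty (Measure.pi μ), lintegral_zero_measure]
    exact (Finset.prod_eq_zero (Finset.mem_univ i)
      (by rw [Measure.eq_zero_of_isEmpty (μ i), lintegral_zero_measure])).symm

theorem pi_withDensity (μ : ∀ i, Measure (X i)) [∀ i, SigmaFinite (μ i)] {ρ : ∀ i, X i → ℝ≥0∞}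
    (hρ : ∀ i, Measurable (ρ i)) [∀ i, SigmaFinite ((μ i).withDensity (ρ i))] :
    Measure.pi (fun i => (μ i).withDensity (ρ i)) =
      (Measure.pi μ).withDensity fun x => ∏ i, ρ i (x i) := by
  refine Measure.pi_eq fun s hs => ?_
  rw [withDensity_apply _ (MeasurableSet.univ_pi hs), Measure.restrict_pi_pi,
    lintegral_pi_prod _ hρ]
  exact Finset.prod_congr rfl fun i _ => (withDensity_apply _ (hs i)).symm

theorem lintegral_pi_comp_of_measurePreserving {Y : ι → Type*} [∀ i, MeasurableSpace (Y i)]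
    {μ : ∀ i, Measure (X i)} [∀ i, SigmaFinite (μ i)] {ν : ∀ i, Measure (Y i)}
    [∀ i, SigmaFinite (ν i)] {ρ : ∀ i, X i → ℝ} (hρ : ∀ i, Measurable (ρ i))
    {T : ∀ i, X i → Y i}
    (hT : ∀ i, MeasurePreserving (T i) ((μ i).withDensity fun x => ENNReal.ofReal (ρ i x)) (ν i))
    {F : (∀ i, Y i) → ℝ≥0∞} (hF : Measurable F) :
    ∫⁻ y, F y ∂Measure.pi ν =
      ∫⁻ x, (∏ i, ENNReal.ofReal (ρ i (x i))) * F (fun i => T i (x i)) ∂Measure.pi μ := by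
  have hpi := measurePreserving_pi _ _ hT
  rw [← hpi.lintegral_comp hF, pi_withDensity μ fun i => (hρ i).ennreal_ofReal]
  exact lintegral_withDensity_eq_lintegral_mul _ (by fun_prop) (hF.comp hpi.measurable)

theorem lintegral_pi_eq_lintegral_insertCoord [DecidableEq ι] {X : Type*} [MeasurableSpace X]
    (μ : Measure X) [SigmaFinite μ] (i₀ : ι) {f : (ι → X) → ℝ≥0∞} (hf : Measurable f) :
    ∫⁻ a, f a ∂Measure.pi (fun _ : ι => μ) =
      ∫⁻ t, ∫⁻ c, f (insertCoord i₀ t c) ∂Measure.pi (fun _ : {i // i ≠ i₀} => μ) ∂μ := by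
  have hsplit := (measurePreserving_piEquivPiSubtypeProd (fun _ : ι => μ) (· = i₀)).symm
  have hunique : MeasurePreserving (MeasurableEquiv.funUnique {i // i = i₀} X).symm μ
      (Measure.pi fun _ => μ) := by
    convert (measurePreserving_funUnique μ {i // i = i₀}).symm
  have hf' : Measurable fun p =>
      f ((MeasurableEquiv.piEquivPiSubtypeProd (fun _ : ι => X) (· = i₀)).symm p) :=
    hf.comp hsplit.measurable
  have hinsert (t : X) (c : {i // i ≠ i₀} → X) : insertCoord i₀ t c =
      (MeasurableEquiv.piEquivPiSubtypeProd (fun _ : ι => X) (· = i₀)).symm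
        ((MeasurableEquiv.funUnique {i // i = i₀} X).symm t, c) := by
    ext i
    by_cases hi : i = i₀ <;> simp [insertCoord, MeasurableEquiv.piEquivPiSubtypeProd, hi]
  simp only [hinsert]
  rw [← hsplit.lintegral_comp hf, lintegral_prod _ hf'.aemeasurable]
  refine Eq.trans ?_ (hunique.lintegral_comp hf'.lintegral_prod_right').symm
  congr!

end ProductMeasures

section PositiveOrthant

open scoped ENNReal

theorem lintegral_eq_mul_lintegral_smul {E : Type*} [NormedAddCommGroup E] [NormedSpace ℝ E]
    [MeasurableSpace E] [BorelSpace E] [FiniteDimensional ℝ E] (μ : Measure E)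
    [μ.IsAddHaarMeasure] {r : ℝ} (hr : 0 < r) {f : E → ℝ≥0∞} (hf : Measurable f) :
    ∫⁻ x, f x ∂μ = ENNReal.ofReal (r ^ Module.finrank ℝ E) * ∫⁻ x, f (r • x) ∂μ := by
  have hpos : 0 < r ^ Module.finrank ℝ E := pow_pos hr _
  rw [← lintegral_map hf (measurable_const_smul r), Measure.map_addHaar_smul μ hr.ne',
    lintegral_smul_measure, smul_eq_mul, ← mul_assoc, ← ENNReal.ofReal_mul hpos.le,
    abs_of_pos (inv_pos.2 hpos), mul_inv_cancel₀ hpos.ne', ENNReal.ofReal_one, one_mul]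

/-- Lebesgue measure on the positive half-line. Its products are the measures on positive orthants
against which parametric integrals are taken. -/
noncomputable def volumePos : Measure ℝ :=
  volume.restrict (Set.Ioi 0)

instance : SigmaFinite volumePos :=
  inferInstanceAs (SigmaFinite (volume.restrict (Set.Ioi 0)))

theorem ae_volumePos : ∀ᵐ t ∂volumePos, 0 < t :=
  ae_restrict_mem measurableSet_Ioi

theorem setOf_forall_pos {ι : Type*} :
    {u : ι → ℝ | ∀ i, 0 < u i} = Set.univ.pi fun _ => Set.Ioi 0 := by
  ext
  simp

theorem measurableSet_setOf_forall_pos {ι : Type*} [Countable ι] :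
    MeasurableSet {u : ι → ℝ | ∀ i, 0 < u i} := by
  rw [setOf_forall_pos]
  exact MeasurableSet.univ_pi fun _ => measurableSet_Ioi

variable {ι : Type*} [Fintype ι]

theorem pi_volumePos :
    Measure.pi (fun _ : ι => volumePos) = volume.restrict {u : ι → ℝ | ∀ i, 0 < u i} := by
  rw [setOf_forall_pos, volume_pi, Measure.restrict_pi_pi]
  rfl

theorem ae_pi_volumePos : ∀ᵐ u ∂Measure.pi (fun _ : ι => volumePos), ∀ i, 0 < u i := by
  rw [pi_volumePos]
  exact ae_restrict_mem measurableSet_setOf_forall_pos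

theorem lintegral_pi_volumePos_smul {r : ℝ} (hr : 0 < r) {f : (ι → ℝ) → ℝ≥0∞}
    (hf : Measurable f) :
    ∫⁻ x, f x ∂Measure.pi (fun _ : ι => volumePos) =
      ENNReal.ofReal (r ^ Fintype.card ι) *
        ∫⁻ x, f (r • x) ∂Measure.pi (fun _ : ι => volumePos) := by
  rw [pi_volumePos, ← lintegral_indicator measurableSet_setOf_forall_pos,
    ← lintegral_indicator measurableSet_setOf_forall_pos, lintegral_eq_mul_lintegral_smul volume hr
      (hf.indicator measurableSet_setOf_forall_pos), Module.finrank_fintype_fun_eq_card]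
  congr 1
  refine lintegral_congr fun x => ?_
  simp [Set.indicator_apply, hr]

theorem lintegral_pi_volumePos_eq_lintegral_smul_insertCoord [DecidableEq ι] (i₀ : ι)
    {f : (ι → ℝ) → ℝ≥0∞} (hf : Measurable f) :
    ∫⁻ a, f a ∂Measure.pi (fun _ : ι => volumePos) =
      ∫⁻ t, ∫⁻ u, ENNReal.ofReal (t ^ (Fintype.card ι - 1)) * f (t • insertCoord i₀ 1 u)
        ∂Measure.pi (fun _ : {i // i ≠ i₀} => volumePos) ∂volumePos := by
  have hins := measurable_insertCoord (X := ℝ) i₀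
  rw [lintegral_pi_eq_lintegral_insertCoord volumePos i₀ hf]
  refine lintegral_congr_ae (ae_volumePos.mono fun t ht => ?_)
  have hsmul (u : {i // i ≠ i₀} → ℝ) : insertCoord i₀ t (t • u) = t • insertCoord i₀ 1 u := by
    ext i
    by_cases hi : i = i₀ <;> simp [insertCoord, hi]
  have hcard : Fintype.card {i // i ≠ i₀} = Fintype.card ι - 1 := by
    simp [Fintype.card_subtype_compl]
  have hft : Measurable fun u => f (insertCoord i₀ t u) :=
    hf.comp (hins.comp measurable_prodMk_left)
  beta_reduce
  rw [lintegral_pi_volumePos_smul ht hft, hcard, ← lintegral_const_mul' _ _ ENNReal.ofReal_ne_top]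
  simp only [hsmul]

end PositiveOrthant

section MatrixAction

variable {ι κ R M : Type*} [Fintype ι] [CommRing R] [AddCommGroup M] [Module R M]

/-- The action of a square matrix with entries in `R` on tuples of elements of an `R`-module. -/
def matrixAction (B : Matrix ι ι R) : (ι → M) →ₗ[R] (ι → M) :=
  LinearMap.pi fun i => ∑ j, B i j • LinearMap.proj j

theorem matrixAction_apply (B : Matrix ι ι R) (x : ι → M) (i : ι) :
    matrixAction B x i = ∑ j, B i j • x j := by
  simp [matrixAction]

theorem det_matrixAction [DecidableEq ι] [Fintype κ] (b : Module.Basis κ R M) (B : Matrix ι ι R) :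
    LinearMap.det (matrixAction B : (ι → M) →ₗ[R] (ι → M)) = B.det ^ Fintype.card κ := by
  let coords : (ι → M) ≃ₗ[R] (κ → ι → R) :=
    { toFun := fun x k i => b.equivFun (x i) k
      invFun := fun y i => b.equivFun.symm fun k => y k i
      map_add' := fun _ _ => by ext; simp
      map_smul' := fun _ _ => by ext; simp
      left_inv := fun _ => by ext; simp
      right_inv := fun _ => by ext; simp [-Module.Basis.equivFun_symm_apply] }
  have hconj : coords.toLinearMap ∘ₗ matrixAction B ∘ₗ coords.symm.toLinearMap =
      LinearMap.pi fun k => Matrix.toLin' B ∘ₗ LinearMap.proj k := by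
    refine LinearMap.ext fun y => funext fun k => funext fun i => ?_
    change b.equivFun (matrixAction B (coords.symm y) i) k = (B.mulVec (y k)) i
    simp [matrixAction_apply, Matrix.mulVec, dotProduct, coords,
      -Module.Basis.equivFun_symm_apply]
  rw [← LinearMap.det_conj (matrixAction B) coords, hconj, LinearMap.det_pi]
  simp

end MatrixAction

section Gaussian

variable {ι E : Type*} [Fintype ι] [NormedAddCommGroup E] [InnerProductSpace ℝ E]

theorem sum_sum_mul_inner_eq_sum_norm_sq (B : Matrix ι ι ℝ) (x : ι → E) :
    ∑ i, ∑ j, (B.transpose * B) i j * inner ℝ (x i) (x j) = ∑ k, ‖matrixAction B x k‖ ^ 2 := by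
  simp only [matrixAction_apply, ← real_inner_self_eq_norm_sq, sum_inner, inner_sum,
    real_inner_smul_left, real_inner_smul_right, Matrix.mul_apply, Matrix.transpose_apply,
    Finset.sum_mul]
  rw [Finset.sum_comm_cycle]
  refine Finset.sum_congr rfl fun k _ => Finset.sum_congr rfl fun i _ =>
    Finset.sum_congr rfl fun j _ => ?_
  rw [real_inner_comm (x j)]
  ring

variable [FiniteDimensional ℝ E] [MeasurableSpace E] [BorelSpace E]

theorem lintegral_exp_neg_norm_sq :
    ∫⁻ x : E, ENNReal.ofReal (Real.exp (-‖x‖ ^ 2)) =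
      ENNReal.ofReal (√Real.pi ^ Module.finrank ℝ E) := by
  have hvalue := GaussianFourier.integral_rexp_neg_mul_sq_norm (V := E) one_pos
  rw [div_one, Real.rpow_div_two_eq_sqrt _ Real.pi_pos.le, Real.rpow_natCast] at hvalue
  simp only [neg_one_mul] at hvalue
  rw [← hvalue, ofReal_integral_eq_lintegral_ofReal]
  · refine Integrable.of_integral_ne_zero ?_
    rw [hvalue]
    positivity
  · exact Filter.Eventually.of_forall fun x => (Real.exp_pos _).le

theorem lintegral_exp_neg_sum_norm_sq :
    ∫⁻ x : ι → E, ENNReal.ofReal (Real.exp (-∑ i, ‖x i‖ ^ 2)) =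
      ENNReal.ofReal (√(Real.pi ^ Fintype.card ι) ^ Module.finrank ℝ E) := by
  simp only [← Finset.sum_neg_distrib, Real.exp_sum,
    ENNReal.ofReal_prod_of_nonneg fun _ _ => (Real.exp_pos _).le]
  rw [volume_pi, lintegral_pi_prod (fun _ => volume)
    (f := fun _ t => ENNReal.ofReal (Real.exp (-‖t‖ ^ 2))) (fun _ => by fun_prop)]
  have hsqrt : √(Real.pi ^ Fintype.card ι) = √Real.pi ^ Fintype.card ι := by
    rw [Real.sqrt_eq_iff_mul_self_eq (by positivity) (by positivity), ← mul_pow,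
      Real.mul_self_sqrt Real.pi_pos.le]
  simp only [lintegral_exp_neg_norm_sq]
  rw [Finset.prod_const, Finset.card_univ, ← ENNReal.ofReal_pow (by positivity), hsqrt,
    pow_right_comm]

open scoped MatrixOrder Matrix.Norms.L2Operator in
theorem lintegral_exp_neg_sum_sum_mul_inner [DecidableEq ι] {L : Matrix ι ι ℝ} (hL : L.PosDef) :
    ∫⁻ x : ι → E, ENNReal.ofReal (Real.exp (-∑ i, ∑ j, L i j * inner ℝ (x i) (x j))) =
      ENNReal.ofReal (√(Real.pi ^ Fintype.card ι / L.det) ^ Module.finrank ℝ E) := by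
  obtain ⟨B, rfl⟩ : ∃ B : Matrix ι ι ℝ, L = B.transpose * B :=
    CStarAlgebra.nonneg_iff_eq_star_mul_self.1 hL.posSemidef.nonneg
  have hdet : B.det ≠ 0 := fun h => hL.det_pos.ne' (by simp [h])
  have hdetAction : LinearMap.det (matrixAction B : (ι → E) →ₗ[ℝ] (ι → E)) =
      B.det ^ Module.finrank ℝ E := by
    rw [det_matrixAction (Module.finBasis ℝ E), Fintype.card_fin]
  have hsubst := lintegral_map (μ := (volume : Measure (ι → E)))
    (f := fun x => ENNReal.ofReal (Real.exp (-∑ i, ‖x i‖ ^ 2))) (by fun_prop)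
    (LinearMap.continuous_of_finiteDimensional (matrixAction B)).measurable
  rw [Measure.map_linearMap_addHaar_eq_smul_addHaar volume
    (hdetAction ▸ pow_ne_zero _ hdet), lintegral_smul_measure, lintegral_exp_neg_sum_norm_sq,
    hdetAction] at hsubst
  simp only [sum_sum_mul_inner_eq_sum_norm_sq]
  rw [← hsubst, smul_eq_mul, ← ENNReal.ofReal_mul (by positivity), Matrix.det_mul,
    Matrix.det_transpose, Real.sqrt_div' _ (mul_self_nonneg _), Real.sqrt_mul_self_eq_abs,
    abs_inv, abs_pow, ← inv_pow, ← mul_pow, inv_mul_eq_div]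

end Gaussian

section Inversion

open EuclideanGeometry (inversion)

variable {E : Type*} [NormedAddCommGroup E] [InnerProductSpace ℝ E]

theorem inversion_zero_one_apply (x : E) : inversion 0 1 x = (‖x‖ ^ 2)⁻¹ • x := by
  simp [inversion]

variable [FiniteDimensional ℝ E]

theorem abs_det_smul_reflection (c : ℝ) (K : Submodule ℝ E) :
    |(c • (K.reflection : E →L[ℝ] E)).det| = |c| ^ Module.finrank ℝ E := by
  have hreflection : |LinearMap.det ((K.reflection : E →L[ℝ] E) : E →ₗ[ℝ] E)| = 1 := by
    refine (congrArg _ K.det_reflection).trans ?_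
    simp
  rw [ContinuousLinearMap.det, ContinuousLinearMap.toLinearMap_smul, LinearMap.det_smul, abs_mul,
    hreflection, mul_one, abs_pow]

variable [Nontrivial E] [MeasurableSpace E] [BorelSpace E]

theorem measurePreserving_inversion :
    MeasurePreserving (inversion (0 : E) 1)
      (volume.withDensity fun x => ENNReal.ofReal (‖x‖ ^ (2 * Module.finrank ℝ E))⁻¹) volume := by
  have hmeas : Measurable (inversion (0 : E) 1) := by
    unfold inversion
    fun_prop
  refine ⟨hmeas, Measure.ext_of_lintegral _ fun f hf => ?_⟩
  have hinv : Function.Involutive (inversion (0 : E) 1) :=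
    EuclideanGeometry.inversion_involutive 0 one_ne_zero
  have himage : inversion (0 : E) 1 '' {0}ᶜ = {0}ᶜ := by
    rw [Set.image_compl_eq hinv.bijective, Set.image_singleton, EuclideanGeometry.inversion_self]
  have hsubst := lintegral_image_eq_lintegral_abs_det_fderiv_mul (volume : Measure E)
    (measurableSet_singleton (0 : E)).compl
    (fun x hx => (EuclideanGeometry.hasFDerivAt_inversion (R := 1) hx).hasFDerivWithinAt)
    hinv.injective.injOn f
  rw [himage, restrict_compl_singleton] at hsubst
  rw [lintegral_map hf hmeas, lintegral_withDensity_eq_lintegral_mul _ (by fun_prop)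
    (g := fun x => f (inversion 0 1 x)) (hf.comp hmeas), hsubst]
  refine lintegral_congr fun x => ?_
  rw [abs_det_smul_reflection, Pi.mul_apply, dist_zero_right, one_div,
    abs_of_nonneg (by positivity), ← pow_mul, inv_pow]

end Inversion

section PositiveHalfLine

open scoped ENNReal

theorem measurePreserving_inv_volumePos :
    MeasurePreserving (fun t => t⁻¹) (volumePos.withDensity fun t => ENNReal.ofReal (t ^ 2)⁻¹)
      volumePos := by
  have hinv : EuclideanGeometry.inversion (0 : ℝ) 1 = fun t => t⁻¹ := by
    ext t
    rw [inversion_zero_one_apply, smul_eq_mul, Real.norm_eq_abs, sq_abs]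
    rcases eq_or_ne t 0 with rfl | ht
    · simp
    · field_simp
  have hpreimage : (fun t : ℝ => t⁻¹) ⁻¹' Set.Ioi 0 = Set.Ioi 0 := by
    ext t
    simp
  have h := (measurePreserving_inversion (E := ℝ)).restrict_preimage
    (measurableSet_Ioi (a := (0 : ℝ)))
  simp only [hinv, hpreimage, restrict_withDensity measurableSet_Ioi, Module.finrank_self,
    mul_one, Real.norm_eq_abs, sq_abs] at h
  exact h

theorem lintegral_exp_neg_mul_volumePos {s : ℝ} (hs : 0 ≤ s) :
    ∫⁻ t, ENNReal.ofReal (Real.exp (-(t * s))) ∂volumePos = (ENNReal.ofReal s)⁻¹ := by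
  rcases hs.eq_or_lt with rfl | hs
  · simp [volumePos]
  · have hint := integrableOn_exp_mul_Ioi (neg_neg_of_pos hs) 0
    have hvalue := integral_exp_mul_Ioi (neg_neg_of_pos hs) 0
    simp only [mul_zero, Real.exp_zero, neg_div_neg_eq, one_div] at hvalue
    rw [← ENNReal.ofReal_inv_of_pos hs, ← hvalue,
      ofReal_integral_eq_lintegral_ofReal hint (ae_of_all _ fun t => (Real.exp_pos _).le)]
    simp only [volumePos, neg_mul, mul_comm s]

/-- A function on the positive half-line which is invariant under inversion and has mass one for
the scale-invariant measure. It serves to fix the scale of an edge in position space. -/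
noncomputable def scaleCutoff (s : ℝ) : ℝ≥0∞ :=
  ENNReal.ofReal (s / (1 + s) ^ 2)

@[fun_prop]
theorem measurable_scaleCutoff : Measurable scaleCutoff := by
  unfold scaleCutoff
  fun_prop

theorem scaleCutoff_inv (s : ℝ) : scaleCutoff s⁻¹ = scaleCutoff s := by
  rcases eq_or_ne s 0 with rfl | hs
  · simp
  · unfold scaleCutoff
    congr 1
    rw [show 1 + s⁻¹ = (1 + s) / s by field_simp; ring, div_pow]
    field_simp

theorem lintegral_inv_mul_scaleCutoff_div {s : ℝ} (hs : 0 < s) :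
    ∫⁻ t, ENNReal.ofReal t⁻¹ * scaleCutoff (s / t) ∂volumePos = 1 := by
  have hderiv : ∀ t ∈ Set.Ici (0 : ℝ), HasDerivAt (fun t => t / (s + t)) (s / (s + t) ^ 2) t := by
    intro t ht
    have hst : s + t ≠ 0 := (add_pos_of_pos_of_nonneg hs ht).ne'
    refine ((hasDerivAt_id t).div ((hasDerivAt_id t).const_add s) hst).congr_deriv ?_
    simp
  have hlim : Filter.Tendsto (fun t => t / (s + t)) Filter.atTop (nhds 1) := by
    have h := (Filter.tendsto_atTop_add_const_left Filter.atTop s Filter.tendsto_id).const_div_atTop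
      s
    refine Filter.Tendsto.congr' ?_ (by simpa using h.const_sub 1)
    filter_upwards [Filter.eventually_gt_atTop 0] with t ht
    rw [one_sub_div (add_pos hs ht).ne', add_sub_cancel_left]
  have hnonneg : ∀ t ∈ Set.Ioi (0 : ℝ), 0 ≤ s / (s + t) ^ 2 := fun t _ => by positivity
  have hint := integrableOn_Ioi_deriv_of_nonneg' hderiv hnonneg hlim
  have hvalue := integral_Ioi_of_hasDerivAt_of_nonneg' hderiv hnonneg hlim
  rw [zero_div, sub_zero] at hvalue
  rw [← ENNReal.ofReal_one, ← hvalue, ofReal_integral_eq_lintegral_ofReal hint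
    (ae_of_all _ fun t => by positivity)]
  refine lintegral_congr_ae (ae_volumePos.mono fun t ht => ?_)
  beta_reduce
  rw [scaleCutoff, ← ENNReal.ofReal_mul (inv_nonneg.2 ht.le)]
  congr 1
  field_simp
  ring

end PositiveHalfLine

section ScaleFixing

open scoped ENNReal

variable {X : Type*} [NormedAddCommGroup X] [NormedSpace ℝ X] [FiniteDimensional ℝ X]
  [MeasurableSpace X] [BorelSpace X]

theorem lintegral_comp_sqrt_smul (μ : Measure X) [μ.IsAddHaarMeasure] {n : ℕ}
    (hn : Module.finrank ℝ X = 2 * n) {t : ℝ} (ht : 0 < t) {f : X → ℝ≥0∞} (hf : Measurable f) :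
    ENNReal.ofReal (t ^ n) * ∫⁻ x, f (√t • x) ∂μ = ∫⁻ x, f x ∂μ := by
  rw [lintegral_eq_mul_lintegral_smul μ (Real.sqrt_pos.2 ht) hf, hn, pow_mul, Real.sq_sqrt ht.le]

-- The Faddeev–Popov device: inserting the mass of the cutoff, written at the scale `t`, and
-- rescaling trades the integral over `t` for the cutoff at scale one.
theorem lintegral_scaleCutoff_mul_lintegral (μ : Measure X) [μ.IsAddHaarMeasure] {n : ℕ}
    (hn : Module.finrank ℝ X = 2 * (n + 1)) {q : X → ℝ} (hq : Measurable q)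
    (hqsmul : ∀ (s : ℝ) x, q (s • x) = s ^ 2 * q x) (hqpos : ∀ᵐ x ∂μ, 0 < q x)
    {f : X → ℝ≥0∞} (hf : Measurable f) :
    ∫⁻ x, scaleCutoff (q x) * ∫⁻ t, ENNReal.ofReal (t ^ n) * f (√t • x) ∂volumePos ∂μ =
      ∫⁻ x, f x ∂μ := by
  calc
    _ = ∫⁻ x, ∫⁻ t, ENNReal.ofReal (t ^ n) * (scaleCutoff (q x) * f (√t • x)) ∂volumePos ∂μ := by
      refine lintegral_congr fun x => ?_
      rw [← lintegral_const_mul _ (by fun_prop)]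
      simp only [mul_left_comm]
    _ = ∫⁻ t, ∫⁻ x, ENNReal.ofReal (t ^ n) * (scaleCutoff (q x) * f (√t • x)) ∂μ ∂volumePos :=
      lintegral_lintegral_swap (by fun_prop)
    _ = ∫⁻ t, ∫⁻ x, ENNReal.ofReal t⁻¹ * (scaleCutoff (q x / t) * f x) ∂μ ∂volumePos := by
      refine lintegral_congr_ae (ae_volumePos.mono fun t ht => ?_)
      have hrescale := lintegral_comp_sqrt_smul μ hn ht
        (f := fun x => scaleCutoff (q x / t) * f x) (by fun_prop)
      have hcancel (x : X) : q (√t • x) / t = q x := by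
        rw [hqsmul, Real.sq_sqrt ht.le, mul_div_cancel_left₀ _ ht.ne']
      simp only [hcancel] at hrescale
      beta_reduce
      rw [lintegral_const_mul' _ _ ENNReal.ofReal_ne_top,
        lintegral_const_mul' _ _ ENNReal.ofReal_ne_top, ← hrescale, ← mul_assoc,
        ← ENNReal.ofReal_mul (inv_nonneg.2 ht.le), pow_succ', inv_mul_cancel_left₀ ht.ne']
    _ = ∫⁻ x, ∫⁻ t, ENNReal.ofReal t⁻¹ * scaleCutoff (q x / t) * f x ∂volumePos ∂μ := by
      simp only [mul_assoc]
      exact lintegral_lintegral_swap (by fun_prop)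
    _ = ∫⁻ x, f x ∂μ := by
      refine lintegral_congr_ae (hqpos.mono fun x hx => ?_)
      beta_reduce
      rw [lintegral_mul_const _ (by fun_prop), lintegral_inv_mul_scaleCutoff_div hx, one_mul]

theorem lintegral_scaleCutoff_mul_lintegral_pi_volumePos {κ : Type*} [Fintype κ]
    [DecidableEq κ] (k₀ : κ) (μ : Measure X) [μ.IsAddHaarMeasure]
    (hκ : Module.finrank ℝ X = 2 * Fintype.card κ)
    {q : X → ℝ} (hq : Measurable q) (hqsmul : ∀ (s : ℝ) x, q (s • x) = s ^ 2 * q x)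
    (hqpos : ∀ᵐ x ∂μ, 0 < q x) {f : (κ → ℝ) → X → ℝ≥0∞} (hf : Measurable (Function.uncurry f))
    (hfsmul : ∀ (s : ℝ) a x, f a (s • x) = f (s ^ 2 • a) x) :
    ∫⁻ x, scaleCutoff (q x) * ∫⁻ a, f a x ∂Measure.pi (fun _ => volumePos) ∂μ =
      ∫⁻ x, ∫⁻ u, f (insertCoord k₀ 1 u) x ∂Measure.pi (fun _ => volumePos) ∂μ := by
  have hcard : Fintype.card κ - 1 + 1 = Fintype.card κ :=
    Nat.sub_add_cancel (Fintype.card_pos_iff.2 ⟨k₀⟩)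
  have hins := measurable_insertCoord (X := ℝ) k₀
  refine Eq.trans ?_ (lintegral_scaleCutoff_mul_lintegral μ (hκ.trans (congrArg _ hcard.symm)) hq
    hqsmul hqpos (by fun_prop))
  refine lintegral_congr fun x => congrArg _ ?_
  rw [lintegral_pi_volumePos_eq_lintegral_smul_insertCoord k₀ (by fun_prop)]
  refine lintegral_congr_ae (ae_volumePos.mono fun t ht => ?_)
  beta_reduce
  simp only [hfsmul, Real.sq_sqrt ht.le]
  rw [lintegral_const_mul' _ _ ENNReal.ofReal_ne_top]

end ScaleFixing

section PositionSpace

open scoped ENNReal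

section Pinned

variable {V E : Type*} [NormedAddCommGroup E]

theorem edgeNormSq_smul [NormedSpace ℝ E] (s : ℝ) (y : V → E) (e : Sym2 V) :
    edgeNormSq (s • y) e = s ^ 2 * edgeNormSq y e := by
  induction e with
  | _ i j => simp [← smul_sub, norm_smul, mul_pow]

theorem insertCoord_zero_smul {X : Type*} [AddMonoid X] [DistribSMul ℝ X] (r : V) (s : ℝ)
    (x : {i : V // i ≠ r} → X) : insertCoord r 0 (s • x) = s • insertCoord r 0 x := by
  ext i
  by_cases hi : i = r <;> simp [insertCoord, hi]

@[fun_prop]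
theorem measurable_edgeNormSq [MeasurableSpace E] [BorelSpace E] [SecondCountableTopology E]
    (e : Sym2 V) : Measurable fun y : V → E => edgeNormSq y e := by
  induction e with
  | _ i j =>
    simp only [edgeNormSq_mk]
    fun_prop

theorem measurable_insertCoord_right {X : Type*} [MeasurableSpace X] (r : V) (t : X) :
    Measurable (insertCoord r t) :=
  (measurable_insertCoord r).comp measurable_prodMk_left

variable [Fintype V]

theorem prod_inv_edgeNormSq (G : SimpleGraph V) (y : V → E) :
    ∏ e : G.edgeSet, (ENNReal.ofReal (edgeNormSq y e))⁻¹ =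
      ∫⁻ a, ENNReal.ofReal (Real.exp (-dirichletForm G a y))
        ∂Measure.pi (fun _ : G.edgeSet => volumePos) := by
  simp only [dirichletForm, ← Finset.sum_neg_distrib, Real.exp_sum,
    ENNReal.ofReal_prod_of_nonneg fun _ _ => (Real.exp_pos _).le]
  rw [lintegral_pi_prod (fun _ => volumePos)
    (f := fun (e : G.edgeSet) t => ENNReal.ofReal (Real.exp (-(t * edgeNormSq y e))))
    (fun _ => by fun_prop)]
  simp only [lintegral_exp_neg_mul_volumePos (edgeNormSq_nonneg _ _)]

theorem dirichletForm_smul [NormedSpace ℝ E] (G : SimpleGraph V) (a : G.edgeSet → ℝ) (s : ℝ)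
    (y : V → E) :
    dirichletForm G a (s • y) = dirichletForm G (s ^ 2 • a) y := by
  simp only [dirichletForm, edgeNormSq_smul, Pi.smul_apply, smul_eq_mul]
  exact Finset.sum_congr rfl fun e _ => by ring

@[fun_prop]
theorem measurable_dirichletForm [MeasurableSpace E] [BorelSpace E]
    [SecondCountableTopology E] (G : SimpleGraph V) :
    Measurable fun p : (G.edgeSet → ℝ) × (V → E) => dirichletForm G p.1 p.2 := by
  unfold dirichletForm
  fun_prop

end Pinned

variable {V E : Type*} [Fintype V] [NormedAddCommGroup E] [InnerProductSpace ℝ E]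
  [FiniteDimensional ℝ E] [MeasurableSpace E] [BorelSpace E]

/-- The position-space Feynman integral of `G` with massless propagators `1 / ‖x i - x j‖ ^ 2`.
Translations are fixed by pinning the vertex `r` at the origin, and dilations by the factor
`scaleCutoff` instead of pinning `z` at a unit vector. -/
noncomputable def positionIntegral (E : Type*) [NormedAddCommGroup E] [InnerProductSpace ℝ E]
    [FiniteDimensional ℝ E] [MeasurableSpace E] [BorelSpace E] (G : SimpleGraph V) (r : V)
    (z : {i : V // i ≠ r}) : ℝ≥0∞ :=
  ∫⁻ x : {i : V // i ≠ r} → E, scaleCutoff (‖x z‖ ^ 2) *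
    ∏ e : G.edgeSet, (ENNReal.ofReal (edgeNormSq (insertCoord r 0 x) e))⁻¹

theorem chart_eq_insertCoord (G : SimpleGraph V) (e₀ : G.edgeSet)
    (u : {e : G.edgeSet // e ≠ e₀} → ℝ) : chart G e₀ u = insertCoord e₀ 1 u := by
  ext e
  by_cases he : e = e₀ <;> simp [chart, insertCoord, he]

theorem positionIntegral_eq_lintegral_chart [Nontrivial E] (G : SimpleGraph V) (r : V)
    (z : {i : V // i ≠ r}) (e₀ : G.edgeSet)
    (hcard : Module.finrank ℝ E * Fintype.card {i : V // i ≠ r} = 2 * Fintype.card G.edgeSet) :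
    positionIntegral E G r z =
      ∫⁻ u, (∫⁻ x : {i : V // i ≠ r} → E,
          ENNReal.ofReal (Real.exp (-dirichletForm G (chart G e₀ u) (insertCoord r 0 x))))
        ∂Measure.pi (fun _ : {e : G.edgeSet // e ≠ e₀} => volumePos) := by
  have hrank : Module.finrank ℝ ({i : V // i ≠ r} → E) = 2 * Fintype.card G.edgeSet := by
    rw [Module.finrank_pi_fintype, Finset.sum_const, smul_eq_mul, mul_comm, ← hcard]
    rfl
  have hpin := measurable_insertCoord_right r (0 : E)
  have hchart := measurable_insertCoord_right e₀ (1 : ℝ)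
  have hpos : ∀ᵐ x : {i : V // i ≠ r} → E, 0 < ‖x z‖ ^ 2 := by
    have hne : ∀ᵐ x : {i : V // i ≠ r} → E, x z ≠ 0 :=
      (Measure.quasiMeasurePreserving_eval (fun _ => volume) z).ae
        (compl_mem_ae_iff.2 (measure_singleton 0))
    exact hne.mono fun x hx => by positivity
  simp only [positionIntegral, prod_inv_edgeNormSq, chart_eq_insertCoord]
  rw [lintegral_scaleCutoff_mul_lintegral_pi_volumePos e₀ volume hrank (q := fun x => ‖x z‖ ^ 2)
    (by fun_prop) (fun s x => by simp [norm_smul, mul_pow]) hpos (by fun_prop)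
    (fun s a x => by rw [insertCoord_zero_smul, dirichletForm_smul]),
    lintegral_lintegral_swap]
  fun_prop

theorem lintegral_exp_neg_dirichletForm {G : SimpleGraph V} (hG : G.Preconnected) (r : V)
    {a : G.edgeSet → ℝ} (ha : ∀ e, 0 < a e) :
    ∫⁻ x : {i : V // i ≠ r} → E,
        ENNReal.ofReal (Real.exp (-dirichletForm G a (insertCoord r 0 x))) =
      ENNReal.ofReal (√(Real.pi ^ Fintype.card {i : V // i ≠ r} / (graphLaplacian G r a).det) ^
        Module.finrank ℝ E) := by
  refine Eq.trans ?_ (lintegral_exp_neg_sum_sum_mul_inner (posDef_graphLaplacian hG ha r))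
  refine lintegral_congr fun x => ?_
  rw [dirichletForm_eq_sum_graphLaplacian G a (insertCoord_self r 0 x)]
  simp only [insertCoord_coe]

end PositionSpace

section ParametricRepresentation

open scoped ENNReal

variable {V : Type*} [Fintype V]

theorem chart_pos (G : SimpleGraph V) (e₀ : G.edgeSet) {u : {e : G.edgeSet // e ≠ e₀} → ℝ}
    (hu : ∀ e, 0 < u e) (e : G.edgeSet) : 0 < chart G e₀ u e := by
  unfold chart
  split_ifs
  exacts [one_pos, hu _]

theorem kirchhoff_chart (G : SimpleGraph V) (r : V) (e₀ : G.edgeSet)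
    {u : {e : G.edgeSet // e ≠ e₀} → ℝ} (hu : ∀ e, 0 < u e) :
    kirchhoff G (chart G e₀ u) =
      (∏ e, u e) * (graphLaplacian G r (chart G e₀ fun e => (u e)⁻¹)).det := by
  have hinv : (chart G e₀ u)⁻¹ = chart G e₀ fun e => (u e)⁻¹ := by
    ext e
    by_cases he : e = e₀ <;> simp [chart, he]
  rw [kirchhoff_eq_prod_mul_det G r fun e => (chart_pos G e₀ hu e).ne', hinv,
    Fintype.prod_eq_mul_prod_subtype_ne _ e₀]
  simp only [chart_eq_insertCoord, insertCoord_self, insertCoord_coe, one_mul]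

/-- The Feynman residue of `G` as an extended nonnegative number, which is `∞` when the residue
integral diverges. -/
noncomputable def extendedFeynmanResidue (G : SimpleGraph V) (e₀ : G.edgeSet) : ℝ≥0∞ :=
  ∫⁻ u in {u : {e : G.edgeSet // e ≠ e₀} → ℝ | ∀ e, 0 < u e},
    ENNReal.ofReal ((kirchhoff G (chart G e₀ u))⁻¹ ^ 2)

theorem positionIntegral_eq_mul_extendedFeynmanResidue {G : SimpleGraph V} (hG : G.Preconnected)
    (r : V) (z : {i : V // i ≠ r}) (e₀ : G.edgeSet)
    (hcard : Fintype.card G.edgeSet + 2 = 2 * Fintype.card V) :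
    positionIntegral (EuclideanSpace ℝ (Fin 4)) G r z =
      ENNReal.ofReal (Real.pi ^ Fintype.card G.edgeSet) * extendedFeynmanResidue G e₀ := by
  replace hcard : Fintype.card G.edgeSet = 2 * Fintype.card {i : V // i ≠ r} := by
    have : 0 < Fintype.card V := Fintype.card_pos_iff.2 ⟨r⟩
    rw [Fintype.card_subtype_compl, Fintype.card_subtype_eq]
    lia
  have hmeas : Measurable fun u => ∫⁻ x : {i : V // i ≠ r} → EuclideanSpace ℝ (Fin 4),
      ENNReal.ofReal (Real.exp (-dirichletForm G (chart G e₀ u) (insertCoord r 0 x))) := by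
    have hpin := measurable_insertCoord_right r (0 : EuclideanSpace ℝ (Fin 4))
    have hchart := measurable_insertCoord_right e₀ (1 : ℝ)
    simp only [chart_eq_insertCoord]
    fun_prop
  rw [positionIntegral_eq_lintegral_chart G r z e₀ (by rw [finrank_euclideanSpace_fin]; lia),
    lintegral_pi_comp_of_measurePreserving (by fun_prop) (fun _ => measurePreserving_inv_volumePos)
      hmeas, extendedFeynmanResidue, ← pi_volumePos,
    ← lintegral_const_mul' _ _ ENNReal.ofReal_ne_top]
  refine lintegral_congr_ae (ae_pi_volumePos.mono fun u hu => ?_)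
  have hinv := chart_pos G e₀ fun e => inv_pos.2 (hu e)
  have hdet := (posDef_graphLaplacian hG hinv r).det_pos
  beta_reduce
  rw [lintegral_exp_neg_dirichletForm hG r hinv, kirchhoff_chart G r e₀ hu,
    ← ENNReal.ofReal_prod_of_nonneg fun e _ => by positivity,
    ← ENNReal.ofReal_mul (Finset.prod_nonneg fun e _ => by positivity),
    ← ENNReal.ofReal_mul (by positivity), Finset.prod_inv_distrib, Finset.prod_pow, hcard,
    finrank_euclideanSpace_fin, show 4 = 2 * 2 from rfl, pow_mul, Real.sq_sqrt (by positivity)]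
  congr 1
  field_simp
  ring

theorem feynmanResidue_eq_toReal (G : SimpleGraph V) (e₀ : G.edgeSet) :
    feynmanResidue G e₀ = (extendedFeynmanResidue G e₀).toReal := by
  have hkirchhoff : Measurable (kirchhoff G) := by
    unfold kirchhoff
    refine Finset.measurable_fun_sum _ fun T _ => Finset.measurable_fun_prod _ fun e _ => ?_
    split_ifs <;> fun_prop
  have hchart : Measurable (chart G e₀) := by
    simpa only [funext (chart_eq_insertCoord G e₀)] using measurable_insertCoord_right e₀ 1
  exact integral_eq_lintegral_of_nonneg_ae (ae_of_all _ fun u => sq_nonneg _)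
    (by fun_prop : Measurable _).aestronglyMeasurable

end ParametricRepresentation

section Completion

open scoped ENNReal

open EuclideanGeometry (inversion)

section Edges

variable {W : Type*} [Fintype W] {M : Type*} [CommMonoid M]

theorem prod_edgeSet_induce_compl_singleton (G : SimpleGraph W) (v : W) (f : Sym2 W → M) :
    ∏ e : (G.induce {v}ᶜ).edgeSet, f ((e : Sym2 ({v}ᶜ : Set W)).map Subtype.val) =
      ∏ e ∈ G.edgeFinset with v ∉ e, f e := by
  have hedges : (G.induce {v}ᶜ).edgeFinset.map (Function.Embedding.subtype _).sym2Map =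
      G.edgeFinset.filter (v ∉ ·) := by
    rw [SimpleGraph.map_edgeFinset_induce]
    ext e
    have hmem : (∀ i ∈ e, i ≠ v) ↔ v ∉ e := ⟨fun h hv => h v hv rfl, fun h i hi hiv => h (hiv ▸ hi)⟩
    simp [Finset.mem_sym2_iff, hmem]
  rw [← hedges, Finset.prod_map,
    ← Finset.prod_subtype _ (fun _ => SimpleGraph.mem_edgeFinset) fun e => f (Sym2.map _ e)]
  rfl

theorem prod_edgeFinset_mul_map (G : SimpleGraph W) (n : W → M) :
    ∏ e ∈ G.edgeFinset, (e.map n).mul = ∏ i, n i ^ G.degree i := by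
  calc ∏ e ∈ G.edgeFinset, (e.map n).mul = ∏ e ∈ G.edgeFinset, ∏ i ∈ e.toFinset, n i := by
        refine Finset.prod_congr rfl fun e he => ?_
        induction e with
        | _ i j =>
          have hij : i ≠ j := G.ne_of_adj (SimpleGraph.mem_edgeFinset.1 he)
          rw [Sym2.toFinset_mk_eq, Finset.prod_pair hij, Sym2.map_mk, Sym2.mul_mk]
    _ = ∏ i, ∏ _e ∈ G.incidenceFinset i, n i := Finset.prod_comm' fun _ _ => by
        simp [SimpleGraph.incidenceSet]
    _ = ∏ i, n i ^ G.degree i := by simp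

end Edges

theorem prod_inv_ofReal {ι : Type*} (s : Finset ι) {f : ι → ℝ} (hf : ∀ i, 0 ≤ f i) :
    ∏ i ∈ s, (ENNReal.ofReal (f i))⁻¹ = (ENNReal.ofReal (∏ i ∈ s, f i))⁻¹ := by
  rw [ENNReal.ofReal_prod_of_nonneg fun i _ => hf i,
    ENNReal.prod_inv_distrib fun i _ j _ _ => Or.inr ENNReal.ofReal_ne_top]

section Conformal

variable {E : Type*} [NormedAddCommGroup E]

/-- The factor `‖x‖ ^ 2` by which the inversion at the origin rescales the squared length of an edge
at `x`, with the value `1` at the origin, so that pinned vertices do not contribute. -/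
noncomputable def conformalFactor (x : E) : ℝ :=
  if x = 0 then 1 else ‖x‖ ^ 2

@[simp]
theorem conformalFactor_zero : conformalFactor (0 : E) = 1 :=
  if_pos rfl

theorem conformalFactor_of_ne_zero {x : E} (hx : x ≠ 0) : conformalFactor x = ‖x‖ ^ 2 :=
  if_neg hx

theorem conformalFactor_pos (x : E) : 0 < conformalFactor x := by
  unfold conformalFactor
  split_ifs <;> positivity

variable [InnerProductSpace ℝ E]

theorem norm_inversion_zero_one (x : E) : ‖inversion (0 : E) 1 x‖ = ‖x‖⁻¹ := by
  simpa using EuclideanGeometry.dist_inversion_center (0 : E) x 1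

theorem norm_inversion_sub_sq_mul_conformalFactor {x y : E} (hx : x ≠ 0) (hy : y ≠ 0) :
    ‖inversion 0 1 x - inversion 0 1 y‖ ^ 2 * (conformalFactor x * conformalFactor y) =
      ‖x - y‖ ^ 2 := by
  have hdist := EuclideanGeometry.dist_inversion_inversion hx hy 1
  rw [dist_zero_right, dist_zero_right, dist_eq_norm, dist_eq_norm] at hdist
  have hx' := norm_ne_zero_iff.2 hx
  have hy' := norm_ne_zero_iff.2 hy
  rw [hdist, conformalFactor_of_ne_zero hx, conformalFactor_of_ne_zero hy]
  field_simp

theorem norm_inversion_sq_mul_conformalFactor {x : E} (hx : x ≠ 0) :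
    ‖inversion 0 1 x‖ ^ 2 * conformalFactor x = 1 := by
  rw [norm_inversion_zero_one, conformalFactor_of_ne_zero hx, ← mul_pow,
    inv_mul_cancel₀ (norm_ne_zero_iff.2 hx), one_pow]

variable {W : Type*}

-- An edge from `v` to `j` drops out on the left, where its conformal factors amount to the squared
-- length `‖y j‖ ^ 2` on the right; for an edge at `w` it is the other way round.
theorem edgeNormSq_inversion_mul_conformalFactor {v w : W} (hvw : v ≠ w) {y : W → E}
    (hy : ∀ i, y i = 0 ↔ i = v ∨ i = w) {e : Sym2 W} (he : ¬e.IsDiag) :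
    (if v ∉ e then edgeNormSq (inversion 0 1 ∘ y) e else 1) *
      (e.map (conformalFactor ∘ y)).mul = if w ∉ e then edgeNormSq y e else 1 := by
  have hyv : y v = 0 := (hy v).2 (Or.inl rfl)
  have hyw : y w = 0 := (hy w).2 (Or.inr rfl)
  have hne (k : W) (hkv : v ≠ k) (hkw : w ≠ k) : y k ≠ 0 := by simp [hy, hkv.symm, hkw.symm]
  by_cases hve : v ∈ e
  · obtain ⟨j, rfl⟩ := hve
    have hvj : v ≠ j := he
    rcases eq_or_ne w j with rfl | hwj
    · simp [hyv, hyw]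
    · simp [hyv, conformalFactor_of_ne_zero (hne j hvj hwj), hvw.symm, hwj]
  by_cases hwe : w ∈ e
  · obtain ⟨j, rfl⟩ := hwe
    have hvj : v ≠ j := fun h => hve (h ▸ Sym2.mem_mk_right w j)
    have hwj : w ≠ j := he
    simp [hyw, hvw, hvj, norm_inversion_sq_mul_conformalFactor (hne j hvj hwj)]
  · rw [if_pos hve, if_pos hwe]
    induction e with
    | _ i j =>
      simp only [Sym2.mem_iff, not_or] at hve hwe
      exact norm_inversion_sub_sq_mul_conformalFactor (hne i hve.1 hwe.1) (hne j hve.2 hwe.2)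

variable [Fintype W]

theorem prod_edgeNormSq_inversion_mul_conformalFactor (G : SimpleGraph W) {v w : W}
    (hvw : v ≠ w) {y : W → E} (hy : ∀ i, y i = 0 ↔ i = v ∨ i = w) :
    (∏ e ∈ G.edgeFinset with v ∉ e, edgeNormSq (inversion 0 1 ∘ y) e) *
        ∏ i, conformalFactor (y i) ^ G.degree i =
      ∏ e ∈ G.edgeFinset with w ∉ e, edgeNormSq y e := by
  rw [← prod_edgeFinset_mul_map G fun i => conformalFactor (y i), Finset.prod_filter,
    Finset.prod_filter, ← Finset.prod_mul_distrib]
  exact Finset.prod_congr rfl fun e he => edgeNormSq_inversion_mul_conformalFactor hvw hy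
    (G.not_isDiag_of_mem_edgeFinset he)

theorem prod_inv_edgeNormSq_inversion (G : SimpleGraph W) {v w : W} (hvw : v ≠ w) {y : W → E}
    (hy : ∀ i, y i = 0 ↔ i = v ∨ i = w) :
    (∏ i, (ENNReal.ofReal (conformalFactor (y i) ^ G.degree i))⁻¹) *
        ∏ e ∈ G.edgeFinset with v ∉ e, (ENNReal.ofReal (edgeNormSq (inversion 0 1 ∘ y) e))⁻¹ =
      ∏ e ∈ G.edgeFinset with w ∉ e, (ENNReal.ofReal (edgeNormSq y e))⁻¹ := by
  rw [prod_inv_ofReal _ fun i => pow_nonneg (conformalFactor_pos (y i)).le _,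
    prod_inv_ofReal _ (edgeNormSq_nonneg _), prod_inv_ofReal _ (edgeNormSq_nonneg _),
    ← prod_edgeNormSq_inversion_mul_conformalFactor G hvw hy,
    ENNReal.ofReal_mul (Finset.prod_nonneg fun e _ => edgeNormSq_nonneg _ e),
    ENNReal.mul_inv (.inr ENNReal.ofReal_ne_top) (.inl ENNReal.ofReal_ne_top), mul_comm]

end Conformal

section Deletion

theorem lintegral_comp_equiv {ι ι' X : Type*} {_ : Fintype ι} {_ : Fintype ι'} [MeasureSpace X]
    [SigmaFinite (volume : Measure X)] (σ : ι ≃ ι') (F : (ι → X) → ℝ≥0∞) :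
    ∫⁻ x : ι' → X, F (x ∘ σ) = ∫⁻ x : ι → X, F x :=
  (volume_preserving_arrowCongr' σ (MeasurableEquiv.refl X) (.id _)).symm.lintegral_comp_emb
    (MeasurableEquiv.measurableEmbedding _) F

theorem measurable_extend_val {W X : Type*} [MeasurableSpace X] (S : Set W) (t : W → X) :
    Measurable fun x : S → X => Function.extend Subtype.val x t := by
  refine measurable_pi_lambda _ fun i => ?_
  by_cases hi : i ∈ S
  · simpa only [Function.extend_val_apply hi] using measurable_pi_apply _
  · simpa only [Function.extend_val_apply' hi] using measurable_const

variable {W E : Type*} [NormedAddCommGroup E] [InnerProductSpace ℝ E] [FiniteDimensional ℝ E]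
  [MeasurableSpace E] [BorelSpace E]

theorem positionIntegral_induce_compl_singleton [Fintype W] (G : SimpleGraph W) (v : W)
    (r : ({v}ᶜ : Set W)) (z : {i : ({v}ᶜ : Set W) // i ≠ r}) {S : Set W} (hS : Sᶜ = {v, ↑r})
    (z' : S) (hz : (z : W) = z') :
    positionIntegral E (G.induce {v}ᶜ) r z =
      ∫⁻ x : S → E, scaleCutoff (‖x z'‖ ^ 2) * ∏ e ∈ G.edgeFinset with v ∉ e,
        (ENNReal.ofReal (edgeNormSq (Function.extend Subtype.val x 0) e))⁻¹ := by
  have hmem (i : W) : i ∈ S ↔ i ≠ v ∧ i ≠ r := by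
    rw [← Set.notMem_compl_iff, hS]
    simp
  let σ : S ≃ {i : ({v}ᶜ : Set W) // i ≠ r} :=
    { toFun i := ⟨⟨i, ((hmem i).1 i.2).1⟩, fun h => ((hmem i).1 i.2).2 (congrArg Subtype.val h)⟩
      invFun i := ⟨i, (hmem i).2 ⟨i.1.2, fun h => i.2 (Subtype.ext h)⟩⟩
      left_inv _ := rfl
      right_inv _ := rfl }
  refine (lintegral_congr fun x => ?_).trans (lintegral_comp_equiv σ _)
  have hplace (i : ({v}ᶜ : Set W)) :
      insertCoord r 0 x i = Function.extend Subtype.val (x ∘ σ) 0 (i : W) := by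
    by_cases hi : i = r
    · rw [hi, insertCoord_self, Function.extend_val_apply' (by simp [hmem]), Pi.zero_apply]
    · lift i to {i // i ≠ r} using hi
      rw [insertCoord_coe]
      exact (Subtype.val_injective.extend_apply (x ∘ σ) 0 (σ.symm i)).symm
  have hz' : σ z' = z := Subtype.ext (Subtype.ext hz.symm)
  rw [← prod_edgeSet_induce_compl_singleton, Function.comp_apply, hz', funext hplace]
  congr! 4 with e
  obtain ⟨e, he⟩ := e
  induction e with
  | _ i j => rfl

theorem lintegral_scaleCutoff_mul_prod_edgeNormSq_comm [Nontrivial E] [Fintype W]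
    {G : SimpleGraph W} (hdeg : ∀ i, G.degree i = Module.finrank ℝ E) {v w : W} (hvw : v ≠ w)
    {S : Set W} (hS : Sᶜ = {v, w}) (z : S) :
    ∫⁻ x : S → E, scaleCutoff (‖x z‖ ^ 2) * ∏ e ∈ G.edgeFinset with v ∉ e,
        (ENNReal.ofReal (edgeNormSq (Function.extend Subtype.val x 0) e))⁻¹ =
      ∫⁻ x : S → E, scaleCutoff (‖x z‖ ^ 2) * ∏ e ∈ G.edgeFinset with w ∉ e,
        (ENNReal.ofReal (edgeNormSq (Function.extend Subtype.val x 0) e))⁻¹ := by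
  have hmem (i : W) : i ∈ S ↔ i ≠ v ∧ i ≠ w := by
    rw [← Set.notMem_compl_iff, hS]
    simp
  have hextend := measurable_extend_val S (0 : W → E)
  rw [volume_pi, lintegral_pi_comp_of_measurePreserving (by fun_prop)
    (fun _ => measurePreserving_inversion) (by fun_prop)]
  have hne : ∀ᵐ x : S → E ∂Measure.pi (fun _ => volume), ∀ i, x i ≠ 0 :=
    ae_all_iff.2 fun i => (Measure.quasiMeasurePreserving_eval (fun _ => volume) i).ae
      (compl_mem_ae_iff.2 (measure_singleton 0))
  refine lintegral_congr_ae (hne.mono fun x hx => ?_)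
  set y := Function.extend Subtype.val x (0 : W → E) with hy
  have hinv : Function.extend Subtype.val (fun i => inversion 0 1 (x i)) (0 : W → E) =
      inversion 0 1 ∘ y := by
    ext1 i
    rw [hy, Function.comp_apply, Function.apply_extend (inversion 0 1)]
    congr 1
    exact funext fun _ => (EuclideanGeometry.inversion_self 0 1).symm
  have hzero (i : W) : y i = 0 ↔ i = v ∨ i = w := by
    rw [or_iff_not_and_not, ← ne_eq, ← ne_eq, ← hmem]
    by_cases hi : i ∈ S
    · simp [hy, Function.extend_val_apply hi, hi, hx]
    · simp [hy, hi]
  have hprod : ∏ i, ENNReal.ofReal (‖x i‖ ^ (2 * Module.finrank ℝ E))⁻¹ =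
      ∏ i, (ENNReal.ofReal (conformalFactor (y i) ^ G.degree i))⁻¹ := by
    refine Fintype.prod_of_injective _ Subtype.val_injective _ _ (fun i hi => ?_) fun i => ?_
    · simp [hy, Function.extend_apply' _ _ _ hi]
    · rw [hy, Subtype.val_injective.extend_apply, conformalFactor_of_ne_zero (hx i), hdeg,
        pow_mul, ENNReal.ofReal_inv_of_pos (pow_pos (by have := hx i; positivity) _)]
  beta_reduce
  rw [norm_inversion_zero_one, inv_pow, scaleCutoff_inv, mul_left_comm, hinv,
    hprod, prod_inv_edgeNormSq_inversion G hvw hzero]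

theorem positionIntegral_induce_compl_singleton_comm [Nontrivial E] [Fintype W]
    {G : SimpleGraph W} (hdeg : ∀ i, G.degree i = Module.finrank ℝ E) {v w z : W} (hvw : v ≠ w)
    (hzv : z ≠ v) (hzw : z ≠ w) :
    positionIntegral E (G.induce {v}ᶜ) ⟨w, hvw.symm⟩
        ⟨⟨z, hzv⟩, fun h => hzw (congrArg Subtype.val h)⟩ =
      positionIntegral E (G.induce {w}ᶜ) ⟨v, hvw⟩
        ⟨⟨z, hzw⟩, fun h => hzv (congrArg Subtype.val h)⟩ := by
  obtain ⟨S, hS⟩ : ∃ S : Set W, Sᶜ = {v, w} := ⟨_, compl_compl _⟩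
  have hz : z ∈ S := by rw [← Set.notMem_compl_iff, hS]; simp [hzv, hzw]
  rw [positionIntegral_induce_compl_singleton G v _ _ hS ⟨z, hz⟩ rfl,
    positionIntegral_induce_compl_singleton G w _ _ (hS.trans (Set.pair_comm v w)) ⟨z, hz⟩ rfl,
    lintegral_scaleCutoff_mul_prod_edgeNormSq_comm hdeg hvw hS]

theorem card_edgeSet_induce_compl_singleton_add_two [Fintype W] {G : SimpleGraph W}
    (hdeg : ∀ i, G.degree i = 4) (v : W) :
    Fintype.card (G.induce ({v}ᶜ : Set W)).edgeSet + 2 =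
      2 * Fintype.card ({v}ᶜ : Set W) := by
  have hsum := G.sum_degrees_eq_twice_card_edges
  have hlt := G.degree_lt_card_verts v
  simp only [hdeg, Finset.sum_const, Finset.card_univ, smul_eq_mul] at hsum hlt
  rw [← SimpleGraph.edgeFinset_card, G.card_edgeFinset_induce_compl_singleton,
    G.card_edgeFinset_deleteIncidenceSet, hdeg, Fintype.card_compl_set, Set.card_singleton]
  lia

end Deletion

theorem extendedFeynmanResidue_eq_of_positionIntegral_eq {V V' : Type*} [Fintype V] [Fintype V']
    {G : SimpleGraph V} {G' : SimpleGraph V'} (hG : G.Preconnected) (hG' : G'.Preconnected)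
    {r : V} {z : {i // i ≠ r}} {r' : V'} {z' : {i // i ≠ r'}} (e₀ : G.edgeSet) (e₀' : G'.edgeSet)
    (hcard : Fintype.card G.edgeSet + 2 = 2 * Fintype.card V)
    (hcard' : Fintype.card G'.edgeSet + 2 = 2 * Fintype.card V')
    (hV : Fintype.card V = Fintype.card V')
    (h : positionIntegral (EuclideanSpace ℝ (Fin 4)) G r z =
      positionIntegral (EuclideanSpace ℝ (Fin 4)) G' r' z') :
    extendedFeynmanResidue G e₀ = extendedFeynmanResidue G' e₀' := by
  have hE : Fintype.card G.edgeSet = Fintype.card G'.edgeSet := by lia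
  rw [positionIntegral_eq_mul_extendedFeynmanResidue hG r z e₀ hcard,
    positionIntegral_eq_mul_extendedFeynmanResidue hG' r' z' e₀' hcard', hE] at h
  refine (ENNReal.mul_right_inj ?_ ENNReal.ofReal_ne_top).1 h
  exact (ENNReal.ofReal_pos.2 (pow_pos Real.pi_pos _)).ne'

end Completion

theorem feynmanResidue_completion_invariance_general {W : Type*} [Fintype W]
    (Ghat : SimpleGraph W) (hdeg : ∀ w, Ghat.degree w = 4) (v w : W)
    (hv : (Ghat.induce ({v}ᶜ : Set W)).Preconnected)
    (hw : (Ghat.induce ({w}ᶜ : Set W)).Preconnected)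
    (ev : (Ghat.induce ({v}ᶜ : Set W)).edgeSet)
    (ew : (Ghat.induce ({w}ᶜ : Set W)).edgeSet) :
    extendedFeynmanResidue (Ghat.induce ({v}ᶜ : Set W)) ev =
      extendedFeynmanResidue (Ghat.induce ({w}ᶜ : Set W)) ew := by
  have hcard := card_edgeSet_induce_compl_singleton_add_two hdeg
  rcases eq_or_ne v w with rfl | hvw
  · obtain ⟨r, z, hrz⟩ : ∃ r z, (Ghat.induce ({v}ᶜ : Set W)).Adj r z := by
      obtain ⟨⟨r, z⟩, hrz⟩ := ev
      exact ⟨r, z, hrz⟩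
    exact extendedFeynmanResidue_eq_of_positionIntegral_eq hv hv ev ew (hcard v) (hcard v) rfl
      (z := ⟨z, hrz.ne'⟩) rfl
  · obtain ⟨z, hz, hzw⟩ : ∃ z ∈ Ghat.neighborFinset v, z ≠ w :=
      Finset.exists_mem_ne (by rw [Ghat.card_neighborFinset_eq_degree, hdeg]; norm_num) w
    have hzv : z ≠ v := ((Ghat.mem_neighborFinset v z).1 hz).ne'
    refine extendedFeynmanResidue_eq_of_positionIntegral_eq hv hw ev ew (hcard v) (hcard w) ?_
      (positionIntegral_induce_compl_singleton_comm (by simpa using hdeg) hvw hzv hzw)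
    simp only [Fintype.card_compl_set, Set.card_singleton]

/-- Completion invariance: if `Ĝ` is a connected 4-regular graph and `v`, `w`
are vertices whose vertex-deleted subgraphs are connected and have finite
Feynman residues, then those residues are equal. -/
theorem feynmanResidue_completion_invariance {W : Type*} [Fintype W]
    (Ghat : SimpleGraph W) (hconn : Ghat.Connected)
    (hdeg : ∀ w, Ghat.degree w = 4)
    (v w : W)
    (hv : (Ghat.induce ({v}ᶜ : Set W)).Connected)
    (hw : (Ghat.induce ({w}ᶜ : Set W)).Connected)
    (ev : (Ghat.induce ({v}ᶜ : Set W)).edgeSet)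
    (ew : (Ghat.induce ({w}ᶜ : Set W)).edgeSet)
    (hintv : IntegrableOn
      (fun u : {e : (Ghat.induce ({v}ᶜ : Set W)).edgeSet // e ≠ ev} → ℝ =>
        (kirchhoff (Ghat.induce ({v}ᶜ : Set W))
          (chart (Ghat.induce ({v}ᶜ : Set W)) ev u))⁻¹ ^ 2)
      {u | ∀ e, 0 < u e})
    (hintw : IntegrableOn
      (fun u : {e : (Ghat.induce ({w}ᶜ : Set W)).edgeSet // e ≠ ew} → ℝ =>
        (kirchhoff (Ghat.induce ({w}ᶜ : Set W))
          (chart (Ghat.induce ({w}ᶜ : Set W)) ew u))⁻¹ ^ 2)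
      {u | ∀ e, 0 < u e}) :
    feynmanResidue (Ghat.induce ({v}ᶜ : Set W)) ev =
      feynmanResidue (Ghat.induce ({w}ᶜ : Set W)) ew := by
  rw [feynmanResidue_eq_toReal, feynmanResidue_eq_toReal,
    feynmanResidue_completion_invariance_general Ghat hdeg v w hv.preconnected
      hw.preconnected ev ew]
end

section
/- Let G be a finite connected simple graph with |E| = 4k + 2 edges for an integer k ≥ 1, with cycle basis matrix C, graph Laplacian Λ_G, distinguished edge e₀, bijection ι, and canonical integrand f as defined. Then f is Lebesgue integrable on the positive orthant of functions u : E \ {e₀} → (0, ∞); in particular the canonical integral I_G(ω^{4k+1}) is finite. -/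
open MeasureTheory
open scoped Classical

/-- The value `φⁿ_X(V₁, …, V_n) = ∑_σ sign(σ)·tr((X⁻¹V_{σ(1)})⋯(X⁻¹V_{σ(n)}))`
of the bi-invariant form `ωⁿ_X = tr((X⁻¹ dX)ⁿ)` at `X` on tangent vectors
`V₁, …, V_n` (factorial-free convention). -/
noncomputable def phiForm {m : ℕ} (n : ℕ) (X : Matrix (Fin m) (Fin m) ℝ)
    (Vs : Fin n → Matrix (Fin m) (Fin m) ℝ) : ℝ :=
  ∑ σ : Equiv.Perm (Fin n),
    ((Equiv.Perm.sign σ : ℤ) : ℝ) *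
      (List.ofFn (fun i => X⁻¹ * Vs (σ i))).prod.trace

/-- The incidence matrix of an oriented graph with source map `src` and
target map `tgt`. -/
noncomputable def incidence {V : Type*} [Fintype V] (G : SimpleGraph V)
    (src tgt : G.edgeSet → V) : Matrix V G.edgeSet ℤ :=
  fun v e => (if v = tgt e then 1 else 0) - (if v = src e then 1 else 0)

/-- The graph Laplacian `Λ_G(x) = Cᵀ · diagonal(x) · C` associated to a cycle
basis matrix `C`. -/
noncomputable def graphLap {E : Type*} [Fintype E] {h : ℕ}
    (C : Matrix E (Fin h) ℤ) (x : E → ℝ) : Matrix (Fin h) (Fin h) ℝ :=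
  (C.map (Int.cast : ℤ → ℝ)).transpose * Matrix.diagonal x *
    C.map (Int.cast : ℤ → ℝ)

/-- The canonical integrand: the pullback to the affine chart `x(e₀) = 1` of
the canonical form `ω^{4k+1} = tr((Λ⁻¹ dΛ)^{4k+1})` on the cell of `G`. -/
noncomputable def canonicalIntegrand {V : Type*} [Fintype V]
    (G : SimpleGraph V) {h : ℕ} (C : Matrix G.edgeSet (Fin h) ℤ)
    (k : ℕ) (e₀ : G.edgeSet) (ι : Fin (4 * k + 1) ≃ {e : G.edgeSet // e ≠ e₀})
    (u : {e : G.edgeSet // e ≠ e₀} → ℝ) : ℝ :=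
  phiForm (4 * k + 1) (graphLap C (chart G e₀ u))
    (fun i => graphLap C (fun e => if e = (ι i : {e : G.edgeSet // e ≠ e₀}).val then 1 else 0))

/-!
In logarithmic coordinates `Λ⁻¹ dΛ = ∑ e, N e · dx_e / x_e` with `∑ e, N e = 1`. For odd `n > 1` the
alternating trace vanishes as soon as one argument is the identity, so up to sign the value on the
`N e` with `e ≠ e₀` does not change when one of them is traded for `N e₀`.

Each `N e` has rank one, so the trace of a product of them is a cyclic product of entries `H e f` of
the weighted hat matrix `H`, the projection onto the cycle space. These entries are bounded
uniformly in `x`, and the symmetry `x e * H e f = x f * H f e` improves this to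
`|H e f| ≤ K * exp (-(log (x e) - log (x f))⁺)`. A cycle passing through `e` and `e₀` therefore
contributes at most a constant times `exp (-|log (x e) - log (x e₀)| / 2)`. Averaging over `e`
bounds the form on the chart `x e₀ = 1` by a product of integrable functions of one variable.
-/

section AlternatingTrace

variable {R ν : Type*} [CommRing R] [Fintype ν] [DecidableEq ν] {n : ℕ}

/-- The alternating form `(M₁, …, Mₙ) ↦ ∑_σ sign(σ) · tr(M_{σ(1)} ⋯ M_{σ(n)})`, i.e. the polarized
form `tr(θⁿ)` of a matrix-valued one-form `θ`. -/
noncomputable def altTrace (R ν : Type*) [CommRing R] [Fintype ν] [DecidableEq ν] (n : ℕ) :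
    Matrix ν ν R [⋀^Fin n]→ₗ[R] R :=
  MultilinearMap.alternatization
    ((Matrix.traceLinearMap ν R R).compMultilinearMap
      (MultilinearMap.mkPiAlgebraFin R n (Matrix ν ν R)))

theorem altTrace_apply (M : Fin n → Matrix ν ν R) :
    altTrace R ν n M = ∑ σ : Equiv.Perm (Fin n),
      ((Equiv.Perm.sign σ : ℤ) : R) * (List.ofFn fun i => M (σ i)).prod.trace := by
  simp [altTrace, MultilinearMap.alternatization_apply, Units.smul_def]

theorem phiForm_eq_altTrace {m : ℕ} (X : Matrix (Fin m) (Fin m) ℝ)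
    (M : Fin n → Matrix (Fin m) (Fin m) ℝ) :
    phiForm n X M = altTrace ℝ (Fin m) n fun i => X⁻¹ * M i := by
  rw [phiForm, altTrace_apply]

theorem continuous_altTrace [TopologicalSpace R] [IsTopologicalRing R] :
    Continuous (altTrace R ν n) := by
  have hprod (σ : Equiv.Perm (Fin n)) :
      Continuous fun M : Fin n → Matrix ν ν R => (List.ofFn fun i => M (σ i)).prod :=
    (ContinuousMultilinearMap.mkPiAlgebraFin R n (Matrix ν ν R)).cont.comp
      (continuous_pi fun i => continuous_apply (σ i))
  refine (continuous_finsetSum Finset.univ fun σ _ =>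
    continuous_const.mul (hprod σ).matrix_trace).congr fun M => (altTrace_apply M).symm

theorem trace_prod_ofFn_finRotate (M : Fin (n + 1) → Matrix ν ν R) :
    (List.ofFn fun i => M (finRotate (n + 1) i)).prod.trace = (List.ofFn M).prod.trace := by
  rw [List.ofFn_succ', List.concat_eq_append, List.prod_append, List.prod_singleton,
    Matrix.trace_mul_comm]
  simp

/-- The part of `altTrace R ν n M` coming from the permutations that put the argument `M j` in
position `p` of the product. -/
noncomputable def altTraceAt (M : Fin n → Matrix ν ν R) (j p : Fin n) : R :=
  ∑ σ : Equiv.Perm (Fin n) with σ p = j,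
    ((Equiv.Perm.sign σ : ℤ) : R) * (List.ofFn fun i => M (σ i)).prod.trace

theorem sum_altTraceAt (M : Fin n → Matrix ν ν R) (j : Fin n) :
    ∑ p, altTraceAt M j p = altTrace R ν n M := by
  simp_rw [altTraceAt, Finset.sum_filter, altTrace_apply]
  rw [Finset.sum_comm]
  simp [← Equiv.eq_symm_apply]

theorem altTraceAt_add_one (hn : Even n) (M : Fin (n + 1) → Matrix ν ν R) (j p : Fin (n + 1)) :
    altTraceAt M j (p + 1) = altTraceAt M j p := by
  refine Finset.sum_equiv (Equiv.mulRight (finRotate (n + 1))) (by simp) fun σ _ => ?_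
  have htrace := trace_prod_ofFn_finRotate fun i => M (σ i)
  simp only [Equiv.coe_mulRight, Equiv.Perm.mul_apply, Equiv.Perm.sign_mul, sign_finRotate,
    Nat.add_sub_cancel, hn.neg_one_pow, mul_one, htrace]

theorem altTraceAt_one_eq_neg_of_commute {M : Fin (n + 2) → Matrix ν ν R} {j : Fin (n + 2)}
    (hj : ∀ i, Commute (M j) (M i)) : altTraceAt M j 1 = -altTraceAt M j 0 := by
  rw [altTraceAt, altTraceAt, ← Finset.sum_neg_distrib]
  refine Finset.sum_equiv (Equiv.mulRight (Equiv.swap 0 1)) (by simp) fun σ hσ => ?_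
  have hσj : σ 1 = j := by simpa using hσ
  have hfix (i : Fin n) : Equiv.swap (0 : Fin (n + 2)) 1 i.succ.succ = i.succ.succ :=
    Equiv.swap_apply_of_ne_of_ne (by simp [Fin.ext_iff]) (by simp [Fin.ext_iff])
  have hcomm : M (σ 0) * (M j * (List.ofFn fun i : Fin n => M (σ i.succ.succ)).prod) =
      M j * (M (σ 0) * (List.ofFn fun i : Fin n => M (σ i.succ.succ)).prod) := by
    rw [← mul_assoc, ← (hj _).eq, mul_assoc]
  simp [List.ofFn_succ, Equiv.Perm.sign_mul, hfix, hσj, hcomm]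

/- Rotations act evenly on an odd number of arguments, so every position of `M j` contributes the
same amount; moving `M j` past its neighbour shows that this amount is its own negative. -/
theorem altTrace_eq_zero_of_commute [IsAddTorsionFree R] (hn : Odd n) (hn1 : 1 < n)
    {M : Fin n → Matrix ν ν R} {j : Fin n} (hj : ∀ i, Commute (M j) (M i)) :
    altTrace R ν n M = 0 := by
  obtain ⟨m, rfl⟩ : ∃ m, n = m + 2 := ⟨n - 2, by omega⟩
  have hrotate := altTraceAt_add_one (n := m + 1) (by grind) M j
  have hzero : altTraceAt M j 0 = 0 := by
    rw [← self_eq_neg, ← altTraceAt_one_eq_neg_of_commute hj, ← hrotate 0, zero_add]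
  have hall (p : Fin (m + 2)) : altTraceAt M j p = 0 := by
    induction p using Fin.induction with
    | zero => exact hzero
    | succ i ih => rw [← Fin.coeSucc_eq_succ, hrotate, ih]
  rw [← sum_altTraceAt M j, Finset.sum_eq_zero fun p _ => hall p]

theorem trace_prod_ofFn_vecMulVec (a b : Fin (n + 1) → ν → R) :
    (List.ofFn fun i => Matrix.vecMulVec (a i) (b i)).prod.trace = ∏ i, b i ⬝ᵥ a (i + 1) := by
  have hprod : (List.ofFn fun i => Matrix.vecMulVec (a i) (b i)).prod =
      (∏ i : Fin n, b i.castSucc ⬝ᵥ a i.succ) • Matrix.vecMulVec (a 0) (b (Fin.last n)) := by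
    induction n with
    | zero => simp
    | succ n ih =>
      rw [List.ofFn_succ, List.prod_cons, ih (fun i => a i.succ) (fun i => b i.succ),
        Fin.prod_univ_succ]
      simp only [Matrix.mul_smul, Matrix.vecMulVec_mul_vecMulVec, smul_smul, Fin.succ_last,
        Fin.castSucc_zero, Fin.succ_castSucc, Matrix.vecMulVec_smul, mul_comm]
  rw [hprod, Matrix.trace_smul, Matrix.trace_vecMulVec, smul_eq_mul, dotProduct_comm,
    Fin.prod_univ_castSucc]
  simp

end AlternatingTrace

theorem alternatingMap_update_eq_neg {R A B ι E : Type*} [Semiring R] [AddCommMonoid A]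
    [Module R A] [AddCommGroup B] [Module R B] [DecidableEq ι] [Fintype E]
    (φ : A [⋀^ι]→ₗ[R] B) (w : E → A) {e₀ : E} (v : ι ≃ {e : E // e ≠ e₀}) (j : ι)
    (hφ : φ (Function.update (fun i => w (v i)) j (∑ e, w e)) = 0) :
    φ (Function.update (fun i => w (v i)) j (w e₀)) = -φ fun i => w (v i) := by
  rw [AlternatingMap.map_update_sum, Fintype.sum_eq_add e₀ (v j) (v j).2.symm] at hφ
  · rw [Function.update_eq_self j fun i => w (v i)] at hφ
    exact eq_neg_of_add_eq_zero_left hφ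
  · rintro e ⟨he₀, hej⟩
    obtain ⟨i, hi⟩ := v.surjective ⟨e, he₀⟩
    have hij : i ≠ j := by rintro rfl; simp [hi] at hej
    refine φ.map_eq_zero_of_eq _ (i := i) (j := j) ?_ hij
    simp [hij, hi]

section SignCone

theorem isBounded_cone_inter_abs_le_one {F : Type*} [NormedAddCommGroup F] [NormedSpace ℝ F]
    [ProperSpace F] {S : Set F} (hS : IsClosed S)
    (hcone : ∀ c : ℝ, 0 < c → ∀ z ∈ S, c • z ∈ S) (φ : F →L[ℝ] ℝ)
    (hφ : ∀ z ∈ S, φ z = 0 → z = 0) : Bornology.IsBounded {z ∈ S | |φ z| ≤ 1} := by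
  have hcont : ContinuousOn (fun z => (φ z)⁻¹) (Metric.sphere 0 1 ∩ S) :=
    φ.continuous.continuousOn.inv₀ fun z hz h0 => by simpa [hφ z hz.2 h0] using hz.1
  obtain ⟨K, hK⟩ :=
    ((isCompact_sphere 0 1).inter_right hS).exists_bound_of_continuousOn hcont
  refine isBounded_iff_forall_norm_le.mpr ⟨max K 0, fun z ⟨hz, hz1⟩ => ?_⟩
  rcases eq_or_ne z 0 with rfl | hz0
  · simp
  have hnorm : 0 < ‖z‖ := norm_pos_iff.mpr hz0
  have hφz : 0 < |φ z| := abs_pos.mpr fun h => hz0 (hφ z hz h)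
  have hquot := hK (‖z‖⁻¹ • z) ⟨by simp [norm_smul, hnorm.ne'], hcone _ (inv_pos.mpr hnorm) z hz⟩
  rw [map_smul, smul_eq_mul, mul_inv, inv_inv, norm_mul, norm_norm, norm_inv, Real.norm_eq_abs,
    ← div_eq_mul_inv, div_le_iff₀ hφz] at hquot
  calc ‖z‖ ≤ K * |φ z| := hquot
    _ ≤ max K 0 * 1 := by gcongr; exact le_max_left K 0
    _ = max K 0 := mul_one _

variable {E : Type*}

/-- The vectors of a subspace `L` whose coordinates are weakly of the signs prescribed by `s`: the
equation `s i * z i = |z i|` says that `z i` is zero or has sign `s i`. -/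
def signCone (L : Submodule ℝ (E → ℝ)) (s : E → SignType) : Set (E → ℝ) :=
  (L : Set (E → ℝ)) ∩ {z | ∀ i, (s i : ℝ) * z i = |z i|}

theorem smul_mem_signCone {L : Submodule ℝ (E → ℝ)} {s : E → SignType} {c : ℝ} (hc : 0 < c)
    {z : E → ℝ} (hz : z ∈ signCone L s) : c • z ∈ signCone L s := by
  refine ⟨L.smul_mem c hz.1, fun i => ?_⟩
  rw [Pi.smul_apply, smul_eq_mul, abs_mul, abs_of_pos hc, ← hz.2 i, mul_left_comm]

theorem mem_signCone_sign {L : Submodule ℝ (E → ℝ)} {y : E → ℝ} (hy : y ∈ L) :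
    y ∈ signCone L fun i => SignType.sign (y i) :=
  ⟨hy, fun i => sign_mul_self (y i)⟩

theorem isClosed_signCone [Finite E] (L : Submodule ℝ (E → ℝ)) (s : E → SignType) :
    IsClosed (signCone L s) := by
  refine L.closed_of_finiteDimensional.inter ?_
  simp only [Set.ofPred_forall]
  exact isClosed_iInter fun i => isClosed_eq (by fun_prop) (by fun_prop)

variable [Fintype E]

/-- `y` is the projection of the `e`-th standard basis vector to `L`, orthogonal with respect to the
inner product of weights `x`. -/
structure IsWeightedProj (L : Submodule ℝ (E → ℝ)) (x : E → ℝ) (e : E) (y : E → ℝ) : Prop where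
  mem : y ∈ L
  sum_eq : ∀ z ∈ L, ∑ i, x i * (z i * y i) = x e * z e

variable {L : Submodule ℝ (E → ℝ)} {x : E → ℝ} {e : E} {y : E → ℝ}

theorem IsWeightedProj.abs_apply_le_one (hy : IsWeightedProj L x e y) (hx : ∀ i, 0 < x i) :
    |y e| ≤ 1 := by
  have hle : x e * (y e * y e) ≤ x e * y e := by
    rw [← hy.sum_eq y hy.mem]
    exact Finset.single_le_sum (f := fun i => x i * (y i * y i))
      (fun i _ => mul_nonneg (hx i).le (mul_self_nonneg _)) (Finset.mem_univ e)
  have hsq := le_of_mul_le_mul_left hle (hx e)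
  exact abs_le.mpr ⟨by nlinarith, by nlinarith⟩

theorem IsWeightedProj.eq_zero_of_mem_signCone (hy : IsWeightedProj L x e y) (hx : ∀ i, 0 < x i)
    {z : E → ℝ} (hz : z ∈ signCone L fun i => SignType.sign (y i)) (hze : z e = 0) : z = 0 := by
  have hmul (i : E) : z i * y i = |z i| * |y i| := by
    rw [← hz.2 i, mul_right_comm, sign_mul_abs, mul_comm]
  have hsum := hy.sum_eq z hz.1
  rw [hze, mul_zero, Finset.sum_eq_zero_iff_of_nonneg fun i _ => by
    rw [hmul]; exact mul_nonneg (hx i).le (by positivity)] at hsum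
  funext i
  have hzy : z i = 0 ∨ y i = 0 := by simpa [(hx i).ne'] using hsum i (Finset.mem_univ i)
  exact hzy.elim id fun h => by simpa [h] using (hz.2 i).symm

/- The projection lies in the cone of its own sign pattern. Orthogonality forces the `e`-th
coordinate to be definite on that cone, and there are only finitely many sign patterns. -/
theorem exists_norm_le_of_isWeightedProj (L : Submodule ℝ (E → ℝ)) (e : E) :
    ∃ K : ℝ, ∀ x y : E → ℝ, (∀ i, 0 < x i) → IsWeightedProj L x e y → ‖y‖ ≤ K := by
  set definite : Set (E → SignType) := {s | ∀ z ∈ signCone L s, z e = 0 → z = 0}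
  have hbounded :
      Bornology.IsBounded (⋃ s ∈ definite, {z ∈ signCone L s | |z e| ≤ 1}) :=
    (Bornology.isBounded_biUnion definite.toFinite).mpr fun s hs =>
      isBounded_cone_inter_abs_le_one (isClosed_signCone L s)
        (fun _ hc _ hz => smul_mem_signCone hc hz) (ContinuousLinearMap.proj e) hs
  obtain ⟨K, hK⟩ := isBounded_iff_forall_norm_le.mp hbounded
  refine ⟨K, fun x y hx hy => hK y (Set.mem_iUnion₂.mpr ⟨fun i => SignType.sign (y i), ?_, ?_⟩)⟩
  · exact fun z hz hze => hy.eq_zero_of_mem_signCone hx hz hze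
  · exact ⟨mem_signCone_sign hy.mem, hy.abs_apply_le_one hx⟩

end SignCone

section HatMatrix

open scoped Matrix

variable {E ν : Type*} [Fintype E]

/-- The Gram matrix `Dᵀ · diagonal(x) · D` of the rows of `D` with weights `x`; for a cycle basis
matrix this is the graph Laplacian. Written as a sum over the rows, so that the matrix
`D e (D e)ᵀ` is visibly its derivative with respect to `x e`. -/
def weightedGram (D : Matrix E ν ℝ) (x : E → ℝ) : Matrix ν ν ℝ :=
  ∑ e, x e • Matrix.vecMulVec (D e) (D e)

variable (D : Matrix E ν ℝ) (x : E → ℝ)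

theorem continuous_weightedGram : Continuous (weightedGram D) := by
  unfold weightedGram
  fun_prop

theorem isSymm_weightedGram : (weightedGram D x).IsSymm := by
  simp [Matrix.IsSymm, weightedGram, Matrix.transpose_sum, Matrix.transpose_vecMulVec]

variable [Fintype ν]

theorem dotProduct_weightedGram_mulVec (z w : ν → ℝ) :
    z ⬝ᵥ weightedGram D x *ᵥ w = ∑ e, x e * ((D *ᵥ z) e * (D *ᵥ w) e) := by
  simp only [weightedGram, Matrix.sum_mulVec, dotProduct_sum, Matrix.smul_mulVec,
    Matrix.vecMulVec_mulVec, dotProduct_smul, smul_eq_mul, Matrix.mulVec, op_smul_eq_smul]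
  exact Finset.sum_congr rfl fun e _ => by rw [dotProduct_comm z, mul_comm (D e ⬝ᵥ z)]

variable [DecidableEq ν]

theorem isUnit_det_weightedGram {D : Matrix E ν ℝ} (hD : Function.Injective D.mulVec)
    {x : E → ℝ} (hx : ∀ e, 0 < x e) : IsUnit (weightedGram D x).det := by
  rw [← Matrix.isUnit_iff_isUnit_det, ← Matrix.mulVec_injective_iff_isUnit,
    ← Matrix.coe_mulVecLin, injective_iff_map_eq_zero]
  intro z hz
  have hsum := dotProduct_weightedGram_mulVec D x z z
  rw [← Matrix.mulVecLin_apply, hz, dotProduct_zero, eq_comm, Finset.sum_eq_zero_iff_of_nonneg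
    fun e _ => mul_nonneg (hx e).le (mul_self_nonneg _)] at hsum
  refine hD (funext fun e => ?_)
  simpa [(hx e).ne'] using hsum e (Finset.mem_univ e)

/-- The matrix `D Λ⁻¹ Dᵀ diagonal(x)` with `Λ = weightedGram D x`: the projection onto the range of
`D` that is orthogonal for the weights `x`, known as the hat matrix of weighted least squares. -/
noncomputable def hatMatrix (D : Matrix E ν ℝ) (x : E → ℝ) : Matrix E E ℝ :=
  Matrix.of fun f e => x e * (D f ⬝ᵥ (weightedGram D x)⁻¹ *ᵥ D e)

theorem mul_hatMatrix_comm (e f : E) : x e * hatMatrix D x e f = x f * hatMatrix D x f e := by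
  have hsymm : D e ⬝ᵥ (weightedGram D x)⁻¹ *ᵥ D f = D f ⬝ᵥ (weightedGram D x)⁻¹ *ᵥ D e := by
    rw [Matrix.dotProduct_mulVec, ← Matrix.mulVec_transpose, (isSymm_weightedGram D x).inv.eq,
      dotProduct_comm]
  simp only [hatMatrix, Matrix.of_apply, hsymm]
  ring

theorem isWeightedProj_hatMatrix_col {D : Matrix E ν ℝ} {x : E → ℝ}
    (hu : IsUnit (weightedGram D x).det) (e : E) :
    IsWeightedProj (LinearMap.range D.mulVecLin) x e ((hatMatrix D x).col e) := by
  have hcol : (hatMatrix D x).col e = D *ᵥ (weightedGram D x)⁻¹ *ᵥ (x e • D e) := by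
    funext f
    rw [Matrix.mulVec_smul, Matrix.mulVec_smul]
    rfl
  refine ⟨⟨_, hcol.symm⟩, ?_⟩
  rintro _ ⟨w, rfl⟩
  calc ∑ i, x i * ((D *ᵥ w) i * (hatMatrix D x).col e i)
      = w ⬝ᵥ weightedGram D x *ᵥ (weightedGram D x)⁻¹ *ᵥ (x e • D e) := by
        rw [dotProduct_weightedGram_mulVec, hcol]
    _ = w ⬝ᵥ (x e • D e) := by
        rw [Matrix.mulVec_mulVec, Matrix.mul_nonsing_inv _ hu, Matrix.one_mulVec]
    _ = x e * (D *ᵥ w) e := by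
        rw [dotProduct_smul, smul_eq_mul, dotProduct_comm, Matrix.mulVec]

theorem exists_abs_hatMatrix_le {D : Matrix E ν ℝ} (hD : Function.Injective D.mulVec) :
    ∃ K : ℝ, ∀ x : E → ℝ, (∀ e, 0 < x e) → ∀ e f, |hatMatrix D x e f| ≤ K := by
  choose K hK using exists_norm_le_of_isWeightedProj (LinearMap.range D.mulVecLin)
  obtain ⟨B, hB⟩ := (Set.finite_range K).bddAbove
  refine ⟨B, fun x hx e f => ?_⟩
  have hproj := isWeightedProj_hatMatrix_col (isUnit_det_weightedGram hD hx) f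
  calc |hatMatrix D x e f| ≤ ‖(hatMatrix D x).col f‖ := norm_le_pi_norm ((hatMatrix D x).col f) e
    _ ≤ K f := hK f x _ hx hproj
    _ ≤ B := hB ⟨f, rfl⟩

end HatMatrix

section LogarithmicForm

open scoped Matrix

variable {E ν : Type*} [Fintype E] [Fintype ν] [DecidableEq ν] {n : ℕ}

/-- The coefficient of `dx_e / x_e` in the matrix-valued one-form `Λ⁻¹ dΛ`, where
`Λ = weightedGram D x`. -/
noncomputable def logDerivCoeff (D : Matrix E ν ℝ) (x : E → ℝ) (e : E) : Matrix ν ν ℝ :=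
  x e • ((weightedGram D x)⁻¹ * Matrix.vecMulVec (D e) (D e))

variable {D : Matrix E ν ℝ} {x : E → ℝ}

theorem sum_logDerivCoeff (hu : IsUnit (weightedGram D x).det) :
    ∑ e, logDerivCoeff D x e = 1 := by
  simp only [logDerivCoeff, ← Matrix.mul_smul, ← Finset.mul_sum]
  exact Matrix.nonsing_inv_mul _ hu

variable (D x) in
theorem trace_prod_ofFn_logDerivCoeff (v : Fin (n + 1) → E) :
    (List.ofFn fun i => logDerivCoeff D x (v i)).prod.trace =
      ∏ i, hatMatrix D x (v i) (v (i + 1)) := by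
  have hcoeff (e : E) : logDerivCoeff D x e =
      Matrix.vecMulVec (x e • (weightedGram D x)⁻¹ *ᵥ D e) (D e) := by
    rw [logDerivCoeff, Matrix.mul_vecMulVec, Matrix.smul_vecMulVec]
  simp only [hcoeff, trace_prod_ofFn_vecMulVec, dotProduct_smul, smul_eq_mul, hatMatrix,
    Matrix.of_apply]

theorem abs_hatMatrix_le_mul_exp (hx : ∀ e, 0 < x e) {K : ℝ}
    (hK : ∀ e f, |hatMatrix D x e f| ≤ K) (e f : E) :
    |hatMatrix D x e f| ≤ K * Real.exp (-(Real.log (x e) - Real.log (x f))⁺) := by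
  rcases le_total (Real.log (x e)) (Real.log (x f)) with hle | hle
  · simpa [posPart_eq_zero.mpr (sub_nonpos.mpr hle)] using hK e f
  · have hflip : hatMatrix D x e f = x f / x e * hatMatrix D x f e := by
      rw [div_mul_eq_mul_div, eq_div_iff (hx e).ne', mul_comm, mul_hatMatrix_comm]
    rw [posPart_eq_self.mpr (sub_nonneg.mpr hle), neg_sub, Real.exp_sub, Real.exp_log (hx e),
      Real.exp_log (hx f), hflip, abs_mul, abs_of_pos (div_pos (hx f) (hx e)), mul_comm]
    gcongr
    · exact (div_pos (hx f) (hx e)).le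
    · exact hK f e

theorem dist_le_sum_dist_cyclic {α : Type*} [PseudoMetricSpace α] (y : Fin (n + 1) → α)
    (p q : Fin (n + 1)) : dist (y p) (y q) ≤ ∑ i, dist (y i) (y (i + 1)) := by
  wlog hpq : p ≤ q generalizing p q
  · rw [dist_comm]
    exact this q p (le_of_not_ge hpq)
  calc dist (y p) (y q)
      ≤ ∑ i ∈ Finset.Ico (p : ℕ) q, dist (y (Fin.ofNat _ i)) (y (Fin.ofNat _ (i + 1))) := by
        simpa using dist_le_Ico_sum_dist (fun i => y (Fin.ofNat (n + 1) i)) hpq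
    _ ≤ ∑ i ∈ Finset.range (n + 1), dist (y (Fin.ofNat _ i)) (y (Fin.ofNat _ (i + 1))) := by
        refine Finset.sum_le_sum_of_subset_of_nonneg (fun i hi => ?_) fun _ _ _ => dist_nonneg
        grind
    _ = ∑ i, dist (y i) (y (i + 1)) := by
        have hsucc (i : Fin (n + 1)) : Fin.ofNat (n + 1) (i + 1) = i + 1 := by
          ext; simp [Fin.val_add]
        rw [Finset.sum_range]
        simp only [hsucc, Fin.ofNat_val_eq_self]

/- The increments of `y` around the cycle sum to zero, so the descents make up half of the total
variation. -/
theorem abs_sub_div_two_le_sum_posPart_cyclic (y : Fin (n + 1) → ℝ) (p q : Fin (n + 1)) :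
    |y p - y q| / 2 ≤ ∑ i, (y i - y (i + 1))⁺ := by
  have hclosed : ∑ i, (y i - y (i + 1)) = 0 := by
    rw [Finset.sum_sub_distrib, sub_eq_zero]
    exact (Equiv.sum_comp (Equiv.addRight 1) y).symm
  have hvariation : ∑ i, |y i - y (i + 1)| = 2 * ∑ i, (y i - y (i + 1))⁺ := by
    rw [← add_zero (∑ i, |_|), ← hclosed, ← Finset.sum_add_distrib, Finset.mul_sum]
    simp [abs_add_eq_two_nsmul_posPart]
  have hpath := dist_le_sum_dist_cyclic y p q
  simp only [Real.dist_eq, hvariation] at hpath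
  linarith

theorem abs_trace_prod_ofFn_logDerivCoeff_le (hx : ∀ e, 0 < x e) {K : ℝ}
    (hK : ∀ e f, |hatMatrix D x e f| ≤ K) (v : Fin (n + 1) → E) (p q : Fin (n + 1)) :
    |(List.ofFn fun i => logDerivCoeff D x (v i)).prod.trace| ≤
      K ^ (n + 1) * Real.exp (-(|Real.log (x (v p)) - Real.log (x (v q))| / 2)) := by
  have hK0 : 0 ≤ K := (abs_nonneg _).trans (hK (v p) (v q))
  rw [trace_prod_ofFn_logDerivCoeff, Finset.abs_prod]
  calc ∏ i, |hatMatrix D x (v i) (v (i + 1))|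
      ≤ ∏ i, K * Real.exp (-(Real.log (x (v i)) - Real.log (x (v (i + 1))))⁺) :=
        Finset.prod_le_prod (fun _ _ => abs_nonneg _)
          fun _ _ => abs_hatMatrix_le_mul_exp hx hK _ _
    _ = K ^ (n + 1) * Real.exp (-∑ i, (Real.log (x (v i)) - Real.log (x (v (i + 1))))⁺) := by
        simp [Finset.prod_mul_distrib, ← Real.exp_sum]
    _ ≤ _ := by
        gcongr
        exact abs_sub_div_two_le_sum_posPart_cyclic (fun i => Real.log (x (v i))) p q

theorem abs_altTrace_logDerivCoeff_le (hx : ∀ e, 0 < x e) {K : ℝ}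
    (hK : ∀ e f, |hatMatrix D x e f| ≤ K) (v : Fin n → E) (p q : Fin n) :
    |altTrace ℝ ν n fun i => logDerivCoeff D x (v i)| ≤
      n.factorial * K ^ n * Real.exp (-(|Real.log (x (v p)) - Real.log (x (v q))| / 2)) := by
  obtain ⟨m, rfl⟩ := Nat.exists_eq_succ_of_ne_zero p.pos.ne'
  have hterm (σ : Equiv.Perm (Fin (m + 1))) :
      |((Equiv.Perm.sign σ : ℤ) : ℝ) *
          (List.ofFn fun i => logDerivCoeff D x (v (σ i))).prod.trace| ≤
        K ^ (m + 1) * Real.exp (-(|Real.log (x (v p)) - Real.log (x (v q))| / 2)) := by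
    rw [abs_mul, abs_unit_intCast, one_mul]
    simpa using abs_trace_prod_ofFn_logDerivCoeff_le hx hK (fun i => v (σ i)) (σ.symm p) (σ.symm q)
  rw [altTrace_apply]
  refine (Finset.abs_sum_le_sum_abs _ _).trans ((Finset.sum_le_sum fun σ _ => hterm σ).trans_eq ?_)
  simp [Fintype.card_perm, mul_assoc]

theorem altTrace_update_logDerivCoeff (hu : IsUnit (weightedGram D x).det) (hn : Odd n)
    (hn1 : 1 < n) {e₀ : E} (ι : Fin n ≃ {e : E // e ≠ e₀}) (j : Fin n) :
    altTrace ℝ ν n (fun i => logDerivCoeff D x (Function.update (fun i => (ι i : E)) j e₀ i)) =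
      -altTrace ℝ ν n fun i => logDerivCoeff D x (ι i) := by
  rw [← alternatingMap_update_eq_neg (altTrace ℝ ν n) (logDerivCoeff D x) ι j]
  · congr 1
    exact Function.comp_update (logDerivCoeff D x) (fun i => (ι i : E)) j e₀
  · rw [sum_logDerivCoeff hu]
    refine altTrace_eq_zero_of_commute hn hn1 (j := j) fun i => ?_
    rw [Function.update_self]
    exact Commute.one_left _

/- Trading some `j ≠ p` for `e₀` changes only the sign, and the cycles of the new form pass through
both `ι p` and `e₀`. -/
theorem exists_abs_altTrace_logDerivCoeff_le (hD : Function.Injective D.mulVec) (hn : Odd n)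
    (hn1 : 1 < n) {e₀ : E} (ι : Fin n ≃ {e : E // e ≠ e₀}) :
    ∃ K : ℝ, ∀ x : E → ℝ, (∀ e, 0 < x e) → ∀ p,
      |altTrace ℝ ν n fun i => logDerivCoeff D x (ι i)| ≤
        K * Real.exp (-(|Real.log (x (ι p)) - Real.log (x e₀)| / 2)) := by
  obtain ⟨K, hK⟩ := exists_abs_hatMatrix_le hD
  refine ⟨n.factorial * K ^ n, fun x hx p => ?_⟩
  have : Nontrivial (Fin n) := Fin.nontrivial_iff_two_le.mpr hn1
  obtain ⟨j, hj⟩ := exists_ne p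
  have hbound := abs_altTrace_logDerivCoeff_le hx (hK x hx)
    (Function.update (fun i => (ι i : E)) j e₀) p j
  rwa [altTrace_update_logDerivCoeff (isUnit_det_weightedGram hD hx) hn hn1, abs_neg,
    Function.update_of_ne hj.symm, Function.update_self] at hbound

end LogarithmicForm

section Integrability

theorem integrableOn_inv_mul_exp_neg_abs_log {δ : ℝ} (hδ : 0 < δ) :
    IntegrableOn (fun t : ℝ => t⁻¹ * Real.exp (-(δ * |Real.log t|))) (Set.Ioi 0) := by
  rw [← Set.Ioc_union_Ioi_eq_Ioi zero_le_one]
  refine IntegrableOn.union ?_ ?_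
  · have hpow := (intervalIntegrable_iff_integrableOn_Ioc_of_le zero_le_one).mp
      (intervalIntegral.intervalIntegrable_rpow' (a := 0) (b := 1) (r := δ - 1) (by linarith))
    refine hpow.congr_fun (fun t ht => ?_) measurableSet_Ioc
    dsimp only
    rw [abs_of_nonpos (Real.log_nonpos ht.1.le ht.2), Real.rpow_sub_one ht.1.ne',
      Real.rpow_def_of_pos ht.1, div_eq_inv_mul]
    ring_nf
  · have hpow := integrableOn_Ioi_rpow_of_lt (a := -δ - 1) (by linarith) one_pos
    refine hpow.congr_fun (fun t ht => ?_) measurableSet_Ioi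
    have ht0 : 0 < t := one_pos.trans ht
    dsimp only
    rw [abs_of_nonneg (Real.log_nonneg (le_of_lt ht)), Real.rpow_sub_one ht0.ne',
      Real.rpow_def_of_pos ht0, div_eq_inv_mul]
    ring_nf

theorem integrableOn_prod_inv_mul_exp_neg_abs_log {κ : Type*} [Fintype κ] {δ : ℝ} (hδ : 0 < δ) :
    IntegrableOn (fun u : κ → ℝ => ∏ e, ((u e)⁻¹ * Real.exp (-(δ * |Real.log (u e)|))))
      {u | ∀ e, 0 < u e} := by
  have hpi : {u : κ → ℝ | ∀ e, 0 < u e} = Set.univ.pi fun _ => Set.Ioi 0 := by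
    ext u; simp
  rw [IntegrableOn, hpi, volume_pi, Measure.restrict_pi_pi]
  exact Integrable.fintype_prod fun _ => integrableOn_inv_mul_exp_neg_abs_log hδ

theorem isOpen_setOf_forall_pos {κ : Type*} [Finite κ] : IsOpen {u : κ → ℝ | ∀ e, 0 < u e} := by
  simp only [Set.ofPred_forall]
  exact isOpen_iInter_of_finite fun e => isOpen_lt continuous_const (continuous_apply e)

theorem mul_exp_neg_le_mul_exp_neg_average {κ : Type*} [Fintype κ] [Nonempty κ] {a K δ : ℝ}
    {c : κ → ℝ} (hδ : 0 ≤ δ) (ha : 0 ≤ a) (h : ∀ i, a ≤ K * Real.exp (-(δ * c i))) :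
    a ≤ K * Real.exp (-(δ * ((∑ i, c i) / Fintype.card κ))) := by
  obtain ⟨i, -, hi⟩ := Finset.exists_le_of_sum_le (s := Finset.univ) Finset.univ_nonempty
    (f := fun _ => (∑ i, c i) / Fintype.card κ) (g := c) (by simp [mul_div_cancel₀])
  have hK : 0 ≤ K := nonneg_of_mul_nonneg_left (ha.trans (h i)) (Real.exp_pos _)
  refine (h i).trans ?_
  gcongr

end Integrability

section CanonicalDensity

open scoped Matrix

variable {E ν : Type*} [DecidableEq E]

/-- The point of the affine chart `x e₀ = 1` with remaining coordinates `u`; this is `chart` for an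
arbitrary index type in place of the edges of a graph. -/
def affineChart (e₀ : E) (u : {e : E // e ≠ e₀} → ℝ) (e : E) : ℝ :=
  if h : e = e₀ then 1 else u ⟨e, h⟩

theorem affineChart_self (e₀ : E) (u : {e : E // e ≠ e₀} → ℝ) : affineChart e₀ u e₀ = 1 :=
  dif_pos rfl

theorem affineChart_coe {e₀ : E} (u : {e : E // e ≠ e₀} → ℝ) (e : {e : E // e ≠ e₀}) :
    affineChart e₀ u e = u e :=
  dif_neg e.2

theorem affineChart_pos {e₀ : E} {u : {e : E // e ≠ e₀} → ℝ} (hu : ∀ e, 0 < u e) (e : E) :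
    0 < affineChart e₀ u e := by
  unfold affineChart
  split_ifs
  exacts [one_pos, hu _]

theorem continuous_affineChart (e₀ : E) : Continuous (affineChart e₀) := by
  refine continuous_pi fun e => ?_
  unfold affineChart
  split_ifs
  exacts [continuous_const, continuous_apply _]

variable [Fintype E] [Fintype ν] [DecidableEq ν] {n : ℕ} {e₀ : E}

/-- The density on the chart `x e₀ = 1` of the form `tr((Λ⁻¹ dΛ)ⁿ)`, where `Λ = weightedGram D x`
for an arbitrary real matrix `D` in place of a cycle basis matrix. -/
noncomputable def canonicalDensity (D : Matrix E ν ℝ) (ι : Fin n ≃ {e : E // e ≠ e₀})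
    (u : {e : E // e ≠ e₀} → ℝ) : ℝ :=
  altTrace ℝ ν n fun i =>
    (weightedGram D (affineChart e₀ u))⁻¹ * Matrix.vecMulVec (D (ι i)) (D (ι i))

theorem altTrace_logDerivCoeff_affineChart (D : Matrix E ν ℝ) (ι : Fin n ≃ {e : E // e ≠ e₀})
    (u : {e : E // e ≠ e₀} → ℝ) :
    altTrace ℝ ν n (fun i => logDerivCoeff D (affineChart e₀ u) (ι i)) =
      (∏ e, u e) * canonicalDensity D ι u := by
  simp only [logDerivCoeff, AlternatingMap.map_smul_univ, affineChart_coe, Equiv.prod_comp ι u,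
    smul_eq_mul, canonicalDensity]

theorem continuousOn_canonicalDensity {D : Matrix E ν ℝ} (hD : Function.Injective D.mulVec)
    (ι : Fin n ≃ {e : E // e ≠ e₀}) :
    ContinuousOn (canonicalDensity D ι) {u | ∀ e, 0 < u e} := by
  have hinv : ContinuousOn (fun u => (weightedGram D (affineChart e₀ u))⁻¹)
      {u | ∀ e, 0 < u e} := fun u hu => by
    have hdet := isUnit_det_weightedGram hD (affineChart_pos hu)
    refine ContinuousAt.continuousWithinAt (ContinuousAt.comp (g := Inv.inv)
      (continuousAt_matrix_inv _ ?_)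
      ((continuous_weightedGram D).comp (continuous_affineChart e₀)).continuousAt)
    rw [Ring.inverse_eq_inv']
    exact continuousAt_inv₀ hdet.ne_zero
  exact continuous_altTrace.comp_continuousOn
    (continuousOn_pi.mpr fun i => (hinv.mul continuousOn_const :))

theorem exists_abs_canonicalDensity_le {D : Matrix E ν ℝ} (hD : Function.Injective D.mulVec)
    (hn : Odd n) (hn1 : 1 < n) (ι : Fin n ≃ {e : E // e ≠ e₀}) :
    ∃ K : ℝ, ∀ u : {e : E // e ≠ e₀} → ℝ, (∀ e, 0 < u e) → |canonicalDensity D ι u| ≤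
      K * ∏ e, ((u e)⁻¹ * Real.exp (-((1 / (2 * n)) * |Real.log (u e)|))) := by
  obtain ⟨K, hK⟩ := exists_abs_altTrace_logDerivCoeff_le hD hn hn1 ι
  refine ⟨K, fun u hu => ?_⟩
  have : Nonempty (Fin n) := ⟨0, by omega⟩
  have hprod : 0 < ∏ e, u e := Finset.prod_pos fun e _ => hu e
  have hbound (p : Fin n) : (∏ e, u e) * |canonicalDensity D ι u| ≤
      K * Real.exp (-(1 / 2 * |Real.log (u (ι p))|)) := by
    have := hK (affineChart e₀ u) (affineChart_pos hu) p
    rwa [altTrace_logDerivCoeff_affineChart, affineChart_self, affineChart_coe, Real.log_one,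
      sub_zero, abs_mul, abs_of_pos hprod, div_eq_inv_mul, ← one_div] at this
  have haverage := mul_exp_neg_le_mul_exp_neg_average one_half_pos.le
    (mul_nonneg hprod.le (abs_nonneg _)) hbound
  rw [Equiv.sum_comp ι fun e => |Real.log (u e)|, Fintype.card_fin] at haverage
  rw [Finset.prod_mul_distrib, Finset.prod_inv_distrib, mul_left_comm, ← div_eq_inv_mul,
    le_div_iff₀' hprod, ← Real.exp_sum, Finset.sum_neg_distrib, ← Finset.mul_sum]
  have hexponent : 1 / (2 * n) * ∑ e, |Real.log (u e)| =
      1 / 2 * ((∑ e, |Real.log (u e)|) / n) := by ring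
  rwa [hexponent]

theorem canonicalIntegrand_integrableOn_general (D : Matrix E ν ℝ)
    (hD : Function.Injective D.mulVec) (hn : Odd n) (hn1 : 1 < n)
    (ι : Fin n ≃ {e : E // e ≠ e₀}) :
    IntegrableOn (canonicalDensity D ι) {u | ∀ e, 0 < u e} := by
  obtain ⟨K, hK⟩ := exists_abs_canonicalDensity_le hD hn hn1 ι
  have hmeas : MeasurableSet {u : {e : E // e ≠ e₀} → ℝ | ∀ e, 0 < u e} :=
    isOpen_setOf_forall_pos.measurableSet
  have hδ : (0 : ℝ) < 1 / (2 * n) := by positivity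
  exact Integrable.mono' ((integrableOn_prod_inv_mul_exp_neg_abs_log hδ).const_mul K)
    ((continuousOn_canonicalDensity hD ι).aestronglyMeasurable hmeas)
    ((ae_restrict_iff' hmeas).mpr (ae_of_all _ hK))

end CanonicalDensity

section GraphLaplacian

theorem graphLap_eq_weightedGram {E : Type*} [Fintype E] {h : ℕ} (C : Matrix E (Fin h) ℤ)
    (x : E → ℝ) : graphLap C x = weightedGram (C.map Int.cast) x := by
  ext i j
  rw [graphLap, weightedGram, Matrix.mul_apply, Matrix.sum_apply]
  simp only [Matrix.mul_diagonal, Matrix.transpose_apply, Matrix.smul_apply,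
    Matrix.vecMulVec_apply, smul_eq_mul]
  exact Finset.sum_congr rfl fun e _ => by ring

theorem graphLap_indicator {E : Type*} [Fintype E] {h : ℕ} (C : Matrix E (Fin h) ℤ) (e : E)
    [∀ e', Decidable (e' = e)] :
    graphLap C (fun e' => if e' = e then 1 else 0) =
      Matrix.vecMulVec (C.map (Int.cast : ℤ → ℝ) e) (C.map (Int.cast : ℤ → ℝ) e) := by
  rw [graphLap_eq_weightedGram, weightedGram, Fintype.sum_eq_single e fun e' he' => by simp [he']]
  simp

theorem canonicalIntegrand_eq_canonicalDensity {V : Type*} [Fintype V] (G : SimpleGraph V) {h : ℕ}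
    (C : Matrix G.edgeSet (Fin h) ℤ) (k : ℕ) (e₀ : G.edgeSet)
    (ι : Fin (4 * k + 1) ≃ {e : G.edgeSet // e ≠ e₀}) :
    canonicalIntegrand G C k e₀ ι = canonicalDensity (C.map Int.cast) ι := by
  funext u
  simp only [canonicalIntegrand, phiForm_eq_altTrace, graphLap_indicator]
  rw [graphLap_eq_weightedGram]
  rfl

end GraphLaplacian

theorem injective_mulVec_map_algebraMap {R S m ν : Type*} [CommRing R] [CommRing S] [IsDomain S]
    [Algebra R S] [FaithfulSMul R S] [Finite m] [Fintype ν] {A : Matrix m ν R}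
    (hA : Function.Injective A.mulVec) : Function.Injective (A.map (algebraMap R S)).mulVec := by
  rw [Matrix.mulVec_injective_iff] at hA ⊢
  exact linearIndependent_algebraMap_comp_iff.mpr hA

/-- The canonical integral `I_G(ω^{4k+1})` is finite: the canonical integrand
is Lebesgue integrable on the positive orthant. -/
theorem canonicalIntegrand_integrableOn
    {V : Type*} [Fintype V] (G : SimpleGraph V) (hG : G.Connected)
    (src tgt : G.edgeSet → V)
    (hor : ∀ e : G.edgeSet, (e : Sym2 V) = s(src e, tgt e))
    (k : ℕ) (hk : 1 ≤ k)
    (hE : Fintype.card G.edgeSet = 4 * k + 2)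
    (h : ℕ)
    (hh : (h : ℤ) = (Fintype.card G.edgeSet : ℤ) - Fintype.card V + 1)
    (C : Matrix G.edgeSet (Fin h) ℤ)
    (hinj : Function.Injective C.mulVecLin)
    (hker : LinearMap.range C.mulVecLin =
      LinearMap.ker (incidence G src tgt).mulVecLin)
    (e₀ : G.edgeSet) (ι : Fin (4 * k + 1) ≃ {e : G.edgeSet // e ≠ e₀}) :
    IntegrableOn (canonicalIntegrand G C k e₀ ι) {u | ∀ e, 0 < u e} := by
  rw [canonicalIntegrand_eq_canonicalDensity]
  exact canonicalIntegrand_integrableOn_general _ (injective_mulVec_map_algebraMap hinj)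
    ⟨2 * k, by ring⟩ (by omega) ι
end
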